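/- Let A₀ = {x ∈ S³ : x₄ = 0 and -1/2 ≤ x₃ ≤ 1/2} be the standard unknotted annulus in the 3-sphere S³, lying in the equatorial 2-sphere {x₄ = 0}, with boundary the two round circles {x ∈ S³ : x₄ = 0, x₃ = 1/2} and {x ∈ S³ : x₄ = 0, x₃ = -1/2}. If A' is any smoothly embedded annulus in S³ whose boundary equals ∂A₀ (the union of these two circles), then there is a smooth ambient isotopy of S³ sending A₀ to A'. -/

import Mathlib

open Metric Manifold Set

noncomputable section

/-- The 3-sphere: the unit sphere in `EuclideanSpace ℝ (Fin 4)`. -/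
abbrev S3 : Type := Metric.sphere (0 : EuclideanSpace ℝ (Fin 4)) 1

/-- A smooth ambient isotopy of the 3-sphere: a smooth map
`h : [0,1] × S³ → S³` with `h 0 = id` and `h λ` a diffeomorphism for every `λ`. -/
structure AmbientIsotopy where
  toFun : Set.Icc (0:ℝ) 1 → S3 → S3
  smooth : ContMDiff ((𝓡∂ 1).prod (𝓡 3)) (𝓡 3) (⊤ : ℕ∞)
    (fun p : Set.Icc (0:ℝ) 1 × S3 => toFun p.1 p.2)
  init : ∀ x, toFun 0 x = x
  diffeo : ∀ lam, ∃ d : Diffeomorph (𝓡 3) (𝓡 3) S3 S3 (⊤ : ℕ∞), ∀ x, toFun lam x = d x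

/-- The ambient isotopy `h` sends the subset `X` of `S³` to the subset `Y`. -/
def AmbientIsotopy.Sends (h : AmbientIsotopy) (X Y : Set S3) : Prop :=
  h.toFun 1 '' X = Y


open Real in
/-- A smoothly embedded annulus in `S³`: a smooth immersion `F : ℝ × [0,1] → S³` with
`F (s + 2π, y) = F (s, y)`, descending to a topological embedding of the quotient
cylinder `(ℝ × [0,1]) / ((s,y) ~ (s+2π,y))` (equivalently, by compactness of the
cylinder, the descended map is injective). -/
structure EmbeddedAnnulus where
  F : ℝ × ℝ → S3
  smooth : ContMDiff 𝓘(ℝ, ℝ × ℝ) (𝓡 3) (⊤ : ℕ∞) F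
  periodic : ∀ s y : ℝ, F (s + 2 * π, y) = F (s, y)
  immersion : ∀ p : ℝ × ℝ, p.2 ∈ Set.Icc (0:ℝ) 1 →
    Function.Injective (mfderiv 𝓘(ℝ, ℝ × ℝ) (𝓡 3) F p)
  inj : ∀ s s' y y' : ℝ, y ∈ Set.Icc (0:ℝ) 1 → y' ∈ Set.Icc (0:ℝ) 1 →
    (F (s, y) = F (s', y') ↔ (y = y' ∧ ∃ k : ℤ, s' = s + 2 * π * k))

/-- The embedded annulus as a subset of `S³`. -/
def EmbeddedAnnulus.carrier (A : EmbeddedAnnulus) : Set S3 :=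
  A.F '' (Set.univ ×ˢ Set.Icc 0 1)

/-- The boundary of an embedded annulus: the image of the two boundary circles. -/
def EmbeddedAnnulus.bdry (A : EmbeddedAnnulus) : Set S3 :=
  A.F '' (Set.univ ×ˢ ({0, 1} : Set ℝ))

/-- The standard unknotted annulus
`A₀ = {x ∈ S³ : x₄ = 0 ∧ -1/2 ≤ x₃ ≤ 1/2}`, lying in the equatorial 2-sphere
`{x₄ = 0}`. (Coordinates `x₁, x₂, x₃, x₄` are indexed by `0, 1, 2, 3`.) -/
def stdAnnulus : Set S3 :=
  {x : S3 | (x : EuclideanSpace ℝ (Fin 4)) 3 = 0 ∧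
    (x : EuclideanSpace ℝ (Fin 4)) 2 ∈ Set.Icc (-(1:ℝ)/2) (1/2)}

/-- The boundary of the standard annulus: the two round circles
`{x ∈ S³ : x₄ = 0, x₃ = 1/2}` and `{x ∈ S³ : x₄ = 0, x₃ = -1/2}`. -/
def stdAnnulusBdry : Set S3 :=
  {x : S3 | (x : EuclideanSpace ℝ (Fin 4)) 3 = 0 ∧
    ((x : EuclideanSpace ℝ (Fin 4)) 2 = 1/2 ∨
      (x : EuclideanSpace ℝ (Fin 4)) 2 = -(1/2))}

open scoped ContDiff Topology

/-- ambient Euclidean space -/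
abbrev E4 : Type := EuclideanSpace ℝ (Fin 4)

lemma fact_finrank : Fact (Module.finrank ℝ E4 = 3 + 1) := ⟨finrank_euclideanSpace_fin⟩

instance instIsManifoldS3 : IsManifold (𝓡 3) ∞ S3 :=
  haveI := fact_finrank
  haveI : IsManifold (𝓡 3) ω S3 := EuclideanSpace.instIsManifoldSphere
  IsManifold.of_le (n := ω) le_top

lemma cm_coe : ContMDiff (𝓡 3) 𝓘(ℝ, E4) ∞ (fun x : S3 => (x : E4)) :=
  haveI := fact_finrank
  contMDiff_coe_sphere

lemma cm_restrict {F : Type*} [NormedAddCommGroup F] [NormedSpace ℝ F] {H : Type*}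
    [TopologicalSpace H] {I : ModelWithCorners ℝ F H} {M : Type*} [TopologicalSpace M]
    [ChartedSpace H M] [IsManifold I ∞ M] {f : M → E4} (hf : ContMDiff I 𝓘(ℝ, E4) ∞ f)
    (hf' : ∀ x, f x ∈ sphere (0 : E4) 1) :
    ContMDiff I (𝓡 3) ∞ (fun x => (⟨f x, hf' x⟩ : S3)) :=
  haveI := fact_finrank
  ContMDiff.codRestrict_sphere hf hf'

/-- Ambient isotopy as a relation. -/
def Amb (X Y : Set S3) : Prop := ∃ h : AmbientIsotopy, h.Sends X Y

lemma Amb.trans {X Y Z : Set S3} (h1 : Amb X Y) (h2 : Amb Y Z) : Amb X Z := by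
  obtain ⟨f, hf⟩ := h1
  obtain ⟨g, hg⟩ := h2
  refine ⟨⟨fun l x => g.toFun l (f.toFun l x), ?_, ?_, ?_⟩, ?_⟩
  · exact g.smooth.comp (contMDiff_fst.prodMk f.smooth)
  · intro x; rw [f.init, g.init]
  · intro l
    obtain ⟨d, hd⟩ := f.diffeo l
    obtain ⟨e, he⟩ := g.diffeo l
    exact ⟨d.trans e, fun x => by simp [hd, he]⟩
  · unfold AmbientIsotopy.Sends at *
    simp only
    rw [← hg, ← hf, image_image]

lemma contMDiff_symm_Icc : ContMDiff (𝓡∂ 1) (𝓡∂ 1) ∞ (unitInterval.symm) := by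
  have h : ContMDiff (𝓡∂ 1) 𝓘(ℝ, ℝ) ∞ (fun x : Icc (0:ℝ) 1 => 1 - (x:ℝ)) :=
    contMDiff_const.sub contMDiff_subtypeVal_Icc
  have h2 : ContMDiffOn 𝓘(ℝ, ℝ) (𝓡∂ 1) ∞ (projIcc (0:ℝ) 1 zero_le_one) (Icc 0 1) :=
    contMDiffOn_projIcc
  have h3 := h2.comp_contMDiff h (fun x => ⟨by linarith [x.2.2], by linarith [x.2.1]⟩)
  convert h3 using 1
  funext x
  simp only [Function.comp]
  rw [projIcc_of_mem zero_le_one (⟨by linarith [x.2.2], by linarith [x.2.1]⟩ : 1 - (x:ℝ) ∈ Icc (0:ℝ) 1)]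
  rfl

lemma Amb.symm {X Y : Set S3} (h1 : Amb X Y) : Amb Y X := by
  obtain ⟨f, hf⟩ := h1
  obtain ⟨d, hd⟩ := f.diffeo 1
  refine ⟨⟨fun l x => f.toFun (unitInterval.symm l) (d.symm x), ?_, ?_, ?_⟩, ?_⟩
  · exact f.smooth.comp ((contMDiff_symm_Icc.comp contMDiff_fst).prodMk
      (d.symm.contMDiff.comp contMDiff_snd))
  · intro x
    have : unitInterval.symm 0 = 1 := unitInterval.symm_zero
    rw [this, hd]; simp
  · intro l
    obtain ⟨e, he⟩ := f.diffeo (unitInterval.symm l)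
    exact ⟨d.symm.trans e, fun x => by simp [he]⟩
  · unfold AmbientIsotopy.Sends at *
    have : unitInterval.symm 1 = 0 := unitInterval.symm_one
    simp only [this, f.init]
    rw [← hf, image_image]
    simp [hd]

/-- smooth positive cutoff, equal to `u` for `u ≥ 1/2` -/
def uu (u : ℝ) : ℝ := Real.smoothTransition (4 * u - 1) * u + (1 - Real.smoothTransition (4 * u - 1))

lemma uu_pos (u : ℝ) : 0 < uu u := by
  unfold uu
  have h1 := Real.smoothTransition.nonneg (4 * u - 1)
  have h2 := Real.smoothTransition.le_one (4 * u - 1)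
  rcases le_or_gt u (1/4) with h | h
  · rw [Real.smoothTransition.zero_of_nonpos (by linarith)]; norm_num
  · rcases eq_or_lt_of_le h1 with h3 | h3
    · rw [← h3]; norm_num
    · have := mul_pos h3 (by linarith : 0 < u)
      linarith

lemma uu_eq {u : ℝ} (h : 1/2 ≤ u) : uu u = u := by
  unfold uu
  rw [Real.smoothTransition.one_of_one_le (by linarith)]; ring

/-- smooth positive modification of the norm -/
def qq (z : E4) : ℝ := Real.sqrt (uu (‖z‖ ^ 2))

lemma qq_pos (z : E4) : 0 < qq z := Real.sqrt_pos.2 (uu_pos _)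

lemma qq_eq {z : E4} (h : 1/2 ≤ ‖z‖ ^ 2) : qq z = ‖z‖ := by
  unfold qq; rw [uu_eq h, Real.sqrt_sq (norm_nonneg _)]

lemma qq_one {z : E4} (h : ‖z‖ = 1) : qq z = 1 := by
  rw [qq_eq (by rw [h]; norm_num), h]

lemma contDiff_uu : ContDiff ℝ ∞ uu := by
  unfold uu
  have h : ContDiff ℝ ∞ (fun u : ℝ => Real.smoothTransition (4 * u - 1)) :=
    Real.smoothTransition.contDiff.comp (by fun_prop)
  exact (h.mul contDiff_id).add (contDiff_const.sub h)

lemma contDiff_qq : ContDiff ℝ ∞ qq := by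
  unfold qq
  exact (contDiff_uu.comp (contDiff_norm_sq ℝ)).sqrt (fun z => (uu_pos _).ne')

/-- A near-identity norm preserving smooth map restricts to a diffeomorphism of the sphere. -/
lemma exists_diffeo (Q : E4 → E4) (hQ : ContDiff ℝ ∞ Q)
    (hd : ∀ x ∈ closedBall (0:E4) 2, ‖fderiv ℝ Q x - ContinuousLinearMap.id ℝ E4‖ < 1/2)
    (hn : ∀ x : E4, 3/4 < ‖x‖ → ‖x‖ < 2 → ‖Q x‖ = ‖x‖) :
    ∃ d : Diffeomorph (𝓡 3) (𝓡 3) S3 S3 (⊤ : ℕ∞), ∀ x, (d x : E4) = Q x := by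
  have hmem : ∀ x : S3, ‖(x : E4)‖ = 1 := fun x => by simp
  have hQ1 : ∀ x : S3, Q x ∈ sphere (0:E4) 1 := fun x => by
    rw [mem_sphere_zero_iff_norm, hn x (by rw [hmem]; norm_num) (by rw [hmem]; norm_num), hmem]
  let Φ : S3 → S3 := fun x => ⟨Q x, hQ1 x⟩
  have hΦs : ContMDiff (𝓡 3) (𝓡 3) ∞ Φ :=
    cm_restrict (hQ.contMDiff.comp cm_coe) hQ1
  have hdiff : Differentiable ℝ Q := hQ.differentiable (by simp)
  -- injectivity
  have hinj : Function.Injective Φ := by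
    intro x y hxy
    have hxy' : Q x = Q y := congrArg Subtype.val hxy
    have hb : ∀ x : S3, (x:E4) ∈ closedBall (0:E4) 2 := fun x => by
      rw [mem_closedBall_zero_iff, hmem]; norm_num
    have := (convex_closedBall (0:E4) 2).norm_image_sub_le_of_norm_hasFDerivWithin_le
      (f := fun z => Q z - z) (f' := fun z => fderiv ℝ Q z - ContinuousLinearMap.id ℝ E4)
      (C := 1/2) (fun z _ => ((hdiff z).hasFDerivAt.sub (hasFDerivAt_id z)).hasFDerivWithinAt)
      (fun z hz => (hd z hz).le) (hb x) (hb y)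
    simp only [hxy'] at this
    have e : Q y - (y:E4) - (Q y - x) = x - y := by abel
    rw [e, norm_sub_rev] at this
    have h0 : ‖(y:E4) - x‖ = 0 := by linarith [norm_nonneg ((y:E4) - x)]
    rw [norm_sub_eq_zero_iff] at h0
    exact Subtype.ext h0.symm
  -- local inverses
  have hloc : ∀ x : S3, ∃ k : E4 → E4, ContDiffAt ℝ ∞ k (Q x) ∧
      ∀ᶠ z in 𝓝 (Q x), (‖z‖ = 1 → ‖k z‖ = 1) ∧ Q (k z) = z := by
    intro x
    have hx2 : (x:E4) ∈ closedBall (0:E4) 2 := by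
      rw [mem_closedBall_zero_iff, hmem]; norm_num
    have hu : ‖(1 : E4 →L[ℝ] E4) - fderiv ℝ Q x‖ < 1 := by
      rw [norm_sub_rev]
      exact (hd x hx2).trans (by norm_num)
    let u : (E4 →L[ℝ] E4)ˣ := Units.oneSub _ hu
    let e : E4 ≃L[ℝ] E4 := ContinuousLinearEquiv.unitsEquiv ℝ E4 u
    have he : (e : E4 →L[ℝ] E4) = fderiv ℝ Q x := by
      ext1 v
      change (u : E4 →L[ℝ] E4) v = _
      simp [u]
    have hfd : HasFDerivAt Q (e : E4 →L[ℝ] E4) x := by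
      rw [he]; exact (hdiff _).hasFDerivAt
    have hca : ContDiffAt ℝ ∞ Q x := hQ.contDiffAt
    refine ⟨hca.localInverse hfd (by simp), hca.to_localInverse hfd (by simp), ?_⟩
    have hright : ∀ᶠ z in 𝓝 (Q x), Q (hca.localInverse hfd (by simp) z) = z :=
      (hca.hasStrictFDerivAt' hfd (by simp)).eventually_right_inverse
    have hk0 : hca.localInverse hfd (by simp) (Q x) = x := hca.localInverse_apply_image hfd (by simp)
    have hcont : Filter.Tendsto (fun z => ‖hca.localInverse hfd (by simp) z‖) (𝓝 (Q x)) (𝓝 1) := by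
      have := (hca.to_localInverse hfd (by simp)).continuousAt.norm
      unfold ContinuousAt at this
      simp only [hk0, hmem] at this
      exact this
    filter_upwards [hright, hcont.eventually (lt_mem_nhds (by norm_num : (3/4:ℝ) < 1)),
      hcont.eventually (gt_mem_nhds (by norm_num : (1:ℝ) < 2))] with z h1 h2 h3
    refine ⟨fun hz => ?_, h1⟩
    rw [← hn _ h2 h3, h1, hz]
  -- surjectivity
  have hopen : IsOpen (range Φ) := by
    rw [isOpen_iff_mem_nhds]
    rintro _ ⟨x, rfl⟩
    obtain ⟨k, -, hk⟩ := hloc x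
    have : ∀ᶠ z : S3 in 𝓝 (Φ x), (‖(z:E4)‖ = 1 → ‖k z‖ = 1) ∧ Q (k z) = z :=
      (continuous_subtype_val.tendsto (Φ x)).eventually hk
    filter_upwards [this] with z hz
    exact ⟨⟨k z, by simpa using hz.1 (hmem z)⟩, Subtype.ext hz.2⟩
  have hclosed : IsClosed (range Φ) := (isCompact_range hΦs.continuous).isClosed
  have : Nonempty S3 := ⟨⟨EuclideanSpace.single 0 1, by simp⟩⟩
  have : PreconnectedSpace S3 := by
    refine isPreconnected_iff_preconnectedSpace.1 (isPreconnected_sphere ?_ _ _)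
    rw [← Module.finrank_eq_rank, finrank_euclideanSpace_fin]; norm_num
  have hsurj : Function.Surjective Φ :=
    range_eq_univ.1 ((IsClopen.eq_univ ⟨hclosed, hopen⟩) (range_nonempty _))
  let e : S3 ≃ S3 := Equiv.ofBijective Φ ⟨hinj, hsurj⟩
  have hinv : ContMDiff (𝓡 3) 𝓘(ℝ, E4) ∞ (fun y : S3 => ((e.symm y : S3) : E4)) := by
    intro y
    obtain ⟨x, rfl⟩ := hsurj y
    obtain ⟨k, hk1, hk⟩ := hloc x
    have h1 : ContMDiffAt (𝓡 3) 𝓘(ℝ, E4) ∞ (fun y : S3 => k y) (Φ x) :=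
      ContMDiffAt.comp (x := Φ x) (I' := 𝓘(ℝ, E4)) (f := fun y : S3 => (y : E4)) (g := k) hk1.contMDiffAt cm_coe.contMDiffAt
    refine h1.congr_of_eventuallyEq ?_
    have : ∀ᶠ z : S3 in 𝓝 (Φ x), (‖(z:E4)‖ = 1 → ‖k z‖ = 1) ∧ Q (k z) = z :=
      (continuous_subtype_val.tendsto (Φ x)).eventually hk
    filter_upwards [this] with z hz
    have : e.symm z = ⟨k z, by simpa using hz.1 (hmem z)⟩ := by
      rw [Equiv.symm_apply_eq]
      exact Subtype.ext hz.2.symm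
    rw [this]
  refine ⟨⟨e, hΦs, ?_⟩, fun x => rfl⟩
  exact cm_restrict hinv (fun y => (e.symm y).2)

/-- A smooth family of maps starting at the identity gives small ambient isotopies. -/
lemma local_amb (D : ℝ × E4 → E4) (hD : ContDiff ℝ ∞ D) (t0 : ℝ) (h0 : ∀ x, D (t0, x) = x) :
    ∀ᶠ t in 𝓝 t0, ∃ h : AmbientIsotopy, ∀ x : S3,
      (h.toFun 1 x : E4) = (qq x / qq (D (t, x))) • D (t, x) := by
  let Q : ℝ × E4 → E4 := fun p => (qq p.2 / qq (D p)) • D p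
  have hQ : ContDiff ℝ ∞ Q :=
    ((contDiff_qq.comp contDiff_snd).div (contDiff_qq.comp hD) (fun p => (qq_pos _).ne')).smul hD
  have hQ0 : ∀ x, Q (t0, x) = x := fun x => by
    simp only [Q, h0]
    rw [div_self (qq_pos x).ne', one_smul]
  have hQd : ∀ t x, fderiv ℝ (fun x => Q (t, x)) x
      = (fderiv ℝ Q (t, x)).comp (ContinuousLinearMap.inr ℝ ℝ E4) := by
    intro t x
    have h1 : HasFDerivAt Q (fderiv ℝ Q (t, x)) (t, x) :=
      (hQ.differentiable (by simp) _).hasFDerivAt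
    exact (h1.comp x (hasFDerivAt_prodMk_right t x)).fderiv
  have hQc : Continuous (fun p : ℝ × E4 => fderiv ℝ (fun x => Q (p.1, x)) p.2) := by
    simp only [hQd]
    exact (hQ.continuous_fderiv (by simp)).clm_comp continuous_const
  have hid : ∀ x, fderiv ℝ (fun x => Q (t0, x)) x = ContinuousLinearMap.id ℝ E4 := by
    intro x
    have : (fun x => Q (t0, x)) = id := funext hQ0
    rw [this, fderiv_id]
  have hev : ∀ᶠ t in 𝓝 t0, ∀ x ∈ closedBall (0:E4) 2,
      ‖fderiv ℝ (fun x => Q (t, x)) x - ContinuousLinearMap.id ℝ E4‖ < 1/2 ∧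
      (3/4 < ‖x‖ → 1/2 < ‖D (t, x)‖ ^ 2) := by
    refine (isCompact_closedBall (0:E4) 2).eventually_forall_of_forall_eventually
      (P := fun t x => ‖fderiv ℝ (fun x => Q (t, x)) x - ContinuousLinearMap.id ℝ E4‖ < 1/2 ∧
      (3/4 < ‖x‖ → 1/2 < ‖D (t, x)‖ ^ 2)) ?_
    intro x _
    refine Filter.Eventually.and ?_ ?_
    · have hc : Continuous (fun p : ℝ × E4 =>
        ‖fderiv ℝ (fun x => Q (p.1, x)) p.2 - ContinuousLinearMap.id ℝ E4‖) :=
        (hQc.sub continuous_const).norm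
      refine hc.tendsto (t0, x) |>.eventually (gt_mem_nhds ?_)
      simp only [hid, sub_self, norm_zero]; norm_num
    · rcases lt_or_ge ‖x‖ (3/4) with h | h
      · have hc : Continuous (fun p : ℝ × E4 => ‖p.2‖) := by fun_prop
        filter_upwards [(hc.tendsto (t0, x)).eventually (gt_mem_nhds h)] with p hp hp'
        exact absurd hp' (not_lt.2 hp.le)
      · have hc : Continuous (fun p : ℝ × E4 => ‖D p‖ ^ 2) := (hD.continuous.norm).pow 2
        have h3 : (1/2:ℝ) < ‖D (t0, x)‖ ^ 2 := by rw [h0]; nlinarith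
        filter_upwards [(hc.tendsto (t0, x)).eventually (lt_mem_nhds h3)] with p hp _
        exact hp
  obtain ⟨δ, hδ, hball⟩ := Metric.eventually_nhds_iff_ball.1 hev
  refine Metric.eventually_nhds_iff_ball.2 ⟨δ, hδ, fun t ht => ?_⟩
  have hmem : ∀ x : S3, ‖(x : E4)‖ = 1 := fun x => by simp
  have hpath : ∀ l : Icc (0:ℝ) 1, t0 + l * (t - t0) ∈ ball t0 δ := by
    intro l
    rw [mem_ball, Real.dist_eq] at ht ⊢
    have : t0 + l * (t - t0) - t0 = l * (t - t0) := by ring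
    rw [this, abs_mul, abs_of_nonneg l.2.1]
    nlinarith [l.2.2, l.2.1, abs_nonneg (t - t0)]
  have hn : ∀ τ ∈ ball t0 δ, ∀ x : E4, 3/4 < ‖x‖ → ‖x‖ < 2 → ‖Q (τ, x)‖ = ‖x‖ := by
    intro τ hτ x h1 h2
    have h3 := (hball τ hτ x (by rw [mem_closedBall_zero_iff]; exact h2.le)).2 h1
    simp only [Q]
    have h4 : 0 < ‖D (τ, x)‖ := by
      rcases eq_or_lt_of_le (norm_nonneg (D (τ, x))) with h | h
      · rw [← h] at h3; norm_num at h3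
      · exact h
    rw [norm_smul, qq_eq h3.le, qq_eq (by nlinarith), norm_div, norm_norm, norm_norm]
    field_simp
  have hS : ∀ p : Icc (0:ℝ) 1 × S3, Q (t0 + p.1 * (t - t0), p.2) ∈ sphere (0:E4) 1 := by
    intro p
    rw [mem_sphere_zero_iff_norm, hn _ (hpath p.1) _ (by rw [hmem]; norm_num)
      (by rw [hmem]; norm_num), hmem]
  refine ⟨⟨fun l x => ⟨Q (t0 + l * (t - t0), x), hS (l, x)⟩, ?_, ?_, ?_⟩, ?_⟩
  · refine cm_restrict (f := fun p : Icc (0:ℝ) 1 × S3 => Q (t0 + p.1 * (t - t0), p.2)) ?_ hS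
    have h1 : ContMDiff ((𝓡∂ 1).prod (𝓡 3)) 𝓘(ℝ, ℝ) ∞
        (fun p : Icc (0:ℝ) 1 × S3 => (p.1 : ℝ)) := contMDiff_subtypeVal_Icc.comp contMDiff_fst
    have h2 : ContMDiff ((𝓡∂ 1).prod (𝓡 3)) 𝓘(ℝ, E4) ∞
        (fun p : Icc (0:ℝ) 1 × S3 => (p.2 : E4)) := cm_coe.comp contMDiff_snd
    have h3 : ContDiff ℝ ∞ (fun z : ℝ × E4 => Q (t0 + z.1 * (t - t0), z.2)) :=
      hQ.comp (by fun_prop)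
    have h4 := h1.prodMk_space h2
    have h5 := h3.contMDiff
    exact ContMDiff.comp (I' := 𝓘(ℝ, ℝ × E4)) (g := fun z : ℝ × E4 => Q (t0 + z.1 * (t - t0), z.2))
      (f := fun p : Icc (0:ℝ) 1 × S3 => ((p.1 : ℝ), (p.2 : E4))) h5 h4
  · intro x
    apply Subtype.ext
    simp [hQ0]
  · intro l
    obtain ⟨d, hd⟩ := exists_diffeo (fun x => Q (t0 + l * (t - t0), x))
      (hQ.comp (by fun_prop)) (fun x hx => (hball _ (hpath l) x hx).1) (hn _ (hpath l))
    exact ⟨d, fun x => Subtype.ext (hd x).symm⟩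
  · intro x
    simp [Q]

/-- Local left inverses of immersions. -/
lemma left_inv {V W : Type*} [NormedAddCommGroup V] [NormedSpace ℝ V] [FiniteDimensional ℝ V]
    [NormedAddCommGroup W] [NormedSpace ℝ W] [FiniteDimensional ℝ W] {f : V → W}
    (hf : ContDiff ℝ ∞ f) {p : V} (hi : Function.Injective (fderiv ℝ f p)) :
    ∃ g : W → V, (∀ᶠ w in 𝓝 (f p), ContDiffAt ℝ ∞ g w) ∧ ∀ᶠ p' in 𝓝 p, g (f p') = p' := by
  have : CompleteSpace V := FiniteDimensional.complete ℝ V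
  obtain ⟨L0, hL0⟩ := (fderiv ℝ f p : V →ₗ[ℝ] W).exists_leftInverse_of_injective
    (LinearMap.ker_eq_bot.2 hi)
  let L : W →L[ℝ] V := LinearMap.toContinuousLinearMap L0
  have hL : L.comp (fderiv ℝ f p) = ContinuousLinearMap.id ℝ V := by
    ext v; exact LinearMap.congr_fun hL0 v
  have hc : ContDiffAt ℝ ∞ (fun x => L (f x)) p := (L.contDiff.comp hf).contDiffAt
  have hd : HasFDerivAt (fun x => L (f x)) ((ContinuousLinearEquiv.refl ℝ V : V ≃L[ℝ] V) : V →L[ℝ] V) p := by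
    have := L.hasFDerivAt.comp p (hf.differentiable (by simp) p).hasFDerivAt
    rw [hL] at this
    exact this
  refine ⟨fun w => hc.localInverse hd (by simp) (L w), ?_, ?_⟩
  · let e := hc.toOpenPartialHomeomorph _ hd (by simp)
    have he : ∀ w, hc.localInverse hd (by simp) w = e.symm w := fun w => rfl
    have hLf : ContDiff ℝ ∞ (fun x => L (f x)) := L.contDiff.comp hf
    have h1 : ∀ᶠ a in 𝓝 p, fderiv ℝ (fun x => L (f x)) a ∈
        range ((↑) : (V ≃L[ℝ] V) → V →L[ℝ] V) := by
      have h2 := (hLf.continuous_fderiv (by simp)).tendsto p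
      refine h2.eventually ?_
      rw [hd.fderiv]
      exact ContinuousLinearEquiv.nhds _
    have h3 : ContinuousAt e.symm (L (f p)) :=
      (hc.to_localInverse hd (by simp)).continuousAt
    have h4 : e.symm (L (f p)) = p := hc.localInverse_apply_image hd (by simp)
    have h5 : ∀ᶠ w in 𝓝 (L (f p)), fderiv ℝ (fun x => L (f x)) (e.symm w) ∈
        range ((↑) : (V ≃L[ℝ] V) → V →L[ℝ] V) := by
      have h3' : Filter.Tendsto e.symm (𝓝 (L (f p))) (𝓝 p) := by
        have h3'' := h3.tendsto
        rwa [h4] at h3''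
      exact h3'.eventually h1
    have h6 : ∀ᶠ w in 𝓝 (L (f p)), w ∈ e.target :=
      e.open_target.mem_nhds (hc.image_mem_toOpenPartialHomeomorph_target hd (by simp))
    have h7 := (L.continuous.tendsto (f p)).eventually (h5.and h6)
    filter_upwards [h7] with w hw
    obtain ⟨⟨A, hA⟩, hw2⟩ := hw
    have h8 : ContDiffAt ℝ ∞ e.symm (L w) := by
      refine e.contDiffAt_symm hw2 (f₀' := A) ?_ hLf.contDiffAt
      rw [hA]
      exact (hLf.differentiable (by simp) _).hasFDerivAt
    exact h8.comp w L.contDiff.contDiffAt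
  · exact (hc.hasStrictFDerivAt' hd (by simp)).eventually_left_inverse

/-- Embedded annuli in the ambient space. -/
structure IsAnn (f : ℝ × ℝ → E4) : Prop where
  norm1 : ∀ s, ∀ y ∈ Icc (0:ℝ) 1, ‖f (s, y)‖ = 1
  per : ∀ s y, f (s + 2 * Real.pi, y) = f (s, y)
  imm : ∀ s, ∀ y ∈ Icc (0:ℝ) 1, Function.Injective (fderiv ℝ f (s, y))
  inj : ∀ s s' : ℝ, ∀ y ∈ Icc (0:ℝ) 1, ∀ y' ∈ Icc (0:ℝ) 1, f (s, y) = f (s', y') →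
    y = y' ∧ ∃ k : ℤ, s' = s + 2 * Real.pi * k

/-- image of an annulus -/
def img (f : ℝ × ℝ → E4) : Set S3 := {x | ∃ s, ∃ y ∈ Icc (0:ℝ) 1, f (s, y) = x}

lemma per_int {α : Type*} {f : ℝ × ℝ → α} (h : ∀ s y, f (s + 2 * Real.pi, y) = f (s, y)) (k : ℤ) (s y : ℝ) :
    f (s + 2 * Real.pi * k, y) = f (s, y) := by
  have hp : Function.Periodic (fun s => f (s, y)) (2 * Real.pi) := fun s => h s y
  have := hp.int_mul k s
  simpa [mul_comm] using this

lemma exists_rep (s : ℝ) : ∃ k : ℤ, s + 2 * Real.pi * k ∈ Icc 0 (2 * Real.pi) := by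
  refine ⟨-toIcoDiv Real.two_pi_pos 0 s, ?_⟩
  have := toIcoMod_mem_Ico Real.two_pi_pos 0 s
  rw [toIcoMod] at this
  simp only [zsmul_eq_mul, zero_add] at this
  have e : s + 2 * Real.pi * ((-toIcoDiv Real.two_pi_pos 0 s : ℤ) : ℝ) = s - (toIcoDiv Real.two_pi_pos 0 s : ℤ) * (2 * Real.pi) := by
    push_cast; ring
  rw [e]
  exact Ico_subset_Icc_self this

/-- The displacement field. -/
lemma exists_D (J : ℝ → ℝ × ℝ → E4) (hJ : ContDiff ℝ ∞ (fun q : ℝ × (ℝ × ℝ) => J q.1 q.2))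
    (hper : ∀ t s y, J t (s + 2 * Real.pi, y) = J t (s, y)) (t0 : ℝ) (h : IsAnn (J t0)) :
    ∃ D : ℝ × E4 → E4, ContDiff ℝ ∞ D ∧ (∀ x, D (t0, x) = x) ∧
      ∀ t s, ∀ y ∈ Icc (0:ℝ) 1, D (t, J t0 (s, y)) = J t (s, y) := by
  have hJt : ContDiff ℝ ∞ (J t0) := hJ.comp (contDiff_const.prodMk contDiff_id)
  let S : ℝ × E4 → Set E4 := fun q => {v | (∀ s, ∀ y ∈ Icc (0:ℝ) 1, J t0 (s, y) = q.2 →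
    v = J q.1 (s, y) - q.2) ∧ (q.1 = t0 → v = 0)}
  have hconv : ∀ q, Convex ℝ (S q) := by
    intro q v hv w hw a b ha hb hab
    refine ⟨fun s y hy he => ?_, fun he => ?_⟩
    · rw [hv.1 s y hy he, hw.1 s y hy he, ← add_smul, hab, one_smul]
    · rw [hv.2 he, hw.2 he]; simp
  have hKc : IsCompact (Icc (0:ℝ) (2 * Real.pi) ×ˢ Icc (0:ℝ) 1) := isCompact_Icc.prod isCompact_Icc
  have key : ∀ x : E4, ∃ U ∈ 𝓝 x, ∃ g : E4 → ℝ × ℝ, ContDiffOn ℝ ∞ g U ∧ ∀ x' ∈ U,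
      ∀ s, ∀ y ∈ Icc (0:ℝ) 1, J t0 (s, y) = x' → ∀ t, J t (g x') = J t (s, y) := by
    intro x
    have hg : ∃ g : E4 → ℝ × ℝ, (∀ᶠ w in 𝓝 x, ContDiffAt ℝ ∞ g w) ∧ ∀ p ∈ Icc (0:ℝ) (2 * Real.pi) ×ˢ Icc (0:ℝ) 1,
        ∀ᶠ z : E4 × (ℝ × ℝ) in 𝓝 (x, p), J t0 z.2 = z.1 → ∀ t, J t (g z.1) = J t z.2 := by
      have hne : ∀ g : E4 → ℝ × ℝ, ∀ p : ℝ × ℝ, J t0 p ≠ x →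
          ∀ᶠ z : E4 × (ℝ × ℝ) in 𝓝 (x, p), J t0 z.2 = z.1 → ∀ t, J t (g z.1) = J t z.2 := by
        intro g p hp
        have h1 : ∀ᶠ z : E4 × (ℝ × ℝ) in 𝓝 (x, p), J t0 z.2 ≠ z.1 := by
          have hc : IsOpen {z : E4 × (ℝ × ℝ) | J t0 z.2 ≠ z.1} :=
            isOpen_ne_fun (hJt.continuous.comp continuous_snd) continuous_fst
          exact hc.mem_nhds hp
        filter_upwards [h1] with z hz hz' using absurd hz' hz
      by_cases hx : ∃ p1 : ℝ × ℝ, p1.2 ∈ Icc (0:ℝ) 1 ∧ J t0 p1 = x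
      · obtain ⟨⟨s1, y1⟩, hy1, rfl⟩ := hx
        obtain ⟨g, hg1, hg2⟩ := left_inv hJt (h.imm s1 y1 hy1)
        refine ⟨g, hg1, fun p hp => ?_⟩
        by_cases hpe : J t0 p = J t0 (s1, y1)
        · obtain ⟨s, y⟩ := p
          obtain ⟨rfl, k, rfl⟩ := h.inj _ _ _ hp.2 _ hy1 hpe
          have hc : Continuous (fun z : E4 × (ℝ × ℝ) => (z.2.1 + 2 * Real.pi * k, z.2.2)) := by
            fun_prop
          have := (hc.tendsto (J t0 (s + 2 * Real.pi * k, y), (s, y))).eventually hg2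
          filter_upwards [this] with z hz hz' t
          rw [per_int (hper t0)] at hz
          rw [← hz', hz, per_int (hper t)]
        · exact hne g p hpe
      · exact ⟨fun _ => 0, Filter.Eventually.of_forall fun _ => contDiffAt_const, fun p hp => hne (fun _ => 0) p (fun he => hx ⟨p, hp.2, he⟩)⟩
    obtain ⟨g, hg1, hg2⟩ := hg
    have hev := hKc.eventually_forall_of_forall_eventually
      (P := fun x' p => J t0 p = x' → ∀ t, J t (g x') = J t p) hg2
    refine ⟨_, Filter.inter_mem hev hg1, g, fun z hz => ContDiffAt.contDiffWithinAt hz.2, ?_⟩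
    intro x' hx' s y hy he t
    obtain ⟨k, hk⟩ := exists_rep s
    have := hx'.1 (s + 2 * Real.pi * k, y) ⟨hk, hy⟩ (by rw [per_int (hper t0), he]) t
    rw [this, per_int (hper t)]
  obtain ⟨v, hv⟩ := exists_contMDiffMap_forall_mem_convex_of_local (n := ⊤) 𝓘(ℝ, ℝ × E4) hconv (by
    rintro ⟨t1, x1⟩
    obtain ⟨U, hU, g, hg, hgU⟩ := key x1
    refine ⟨univ ×ˢ U, prod_mem_nhds Filter.univ_mem hU,
      fun q => J q.1 (g q.2) - J t0 (g q.2), ?_, ?_⟩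
    · rw [contMDiffOn_iff_contDiffOn]
      have h2 : ContDiffOn ℝ ∞ (fun q : ℝ × E4 => g q.2) (univ ×ˢ U) :=
        hg.comp contDiff_snd.contDiffOn (fun q hq => hq.2)
      exact (hJ.comp_contDiffOn (contDiff_fst.contDiffOn.prodMk h2)).sub
        (hJt.comp_contDiffOn h2)
    · rintro ⟨t, x⟩ hq
      refine ⟨fun s y hy he => ?_, fun he => ?_⟩
      · simp only at he ⊢
        rw [hgU x hq.2 s y hy he, hgU x hq.2 s y hy he, he]
      · simp only at he ⊢
        rw [he, sub_self])
  refine ⟨fun q => q.2 + v q, contDiff_snd.add v.contMDiff.contDiff, fun x => ?_, ?_⟩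
  · simp only [(hv (t0, x)).2 rfl, add_zero]
  · intro t s y hy
    simp only [(hv (t, J t0 (s, y))).1 s y hy rfl]
    abel

/-- Isotopic annuli are ambient isotopic. -/
lemma amb_of_family (J : ℝ → ℝ × ℝ → E4) (hJ : ContDiff ℝ ∞ (fun q : ℝ × (ℝ × ℝ) => J q.1 q.2))
    (hper : ∀ t s y, J t (s + 2 * Real.pi, y) = J t (s, y))
    (h : ∀ t ∈ Icc (0:ℝ) 1, IsAnn (J t)) : Amb (img (J 0)) (img (J 1)) := by
  refine isPreconnected_Icc.induction₂ (fun a b => Amb (img (J a)) (img (J b))) ?_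
    (fun x y z _ _ _ h1 h2 => h1.trans h2) (fun x y _ _ h1 => h1.symm)
    (left_mem_Icc.2 zero_le_one) (right_mem_Icc.2 zero_le_one)
  intro t0 ht0
  obtain ⟨D, hD, hD0, hDJ⟩ := exists_D J hJ hper t0 (h t0 ht0)
  filter_upwards [nhdsWithin_le_nhds (local_amb D hD t0 hD0), self_mem_nhdsWithin] with t ⟨H, hH⟩ ht
  refine ⟨H, ?_⟩
  have hval : ∀ x : S3, ∀ s, ∀ y ∈ Icc (0:ℝ) 1, J t0 (s, y) = x → (H.toFun 1 x : E4) = J t (s, y) := by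
    intro x s y hy he
    rw [hH, ← he, hDJ t s y hy, qq_one ((h t ht).norm1 s y hy), qq_one ((h t0 ht0).norm1 s y hy)]
    simp
  unfold AmbientIsotopy.Sends
  ext z
  constructor
  · rintro ⟨x, ⟨s, y, hy, he⟩, rfl⟩
    exact ⟨s, y, hy, (hval x s y hy he).symm⟩
  · rintro ⟨s, y, hy, he⟩
    refine ⟨⟨J t0 (s, y), by simpa using (h t0 ht0).norm1 s y hy⟩, ⟨s, y, hy, rfl⟩, ?_⟩
    apply Subtype.ext
    rw [hval _ s y hy rfl, he]

/-- Smoothness of parametric integrals. -/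
lemma contDiff_param (n : ℕ) : ∀ (F : Type) [NormedAddCommGroup F] [NormedSpace ℝ F]
    [CompleteSpace F] (g : (ℝ × ℝ) × ℝ → F), ContDiff ℝ n g →
    ContDiff ℝ n (fun p : ℝ × ℝ => ∫ τ in (0:ℝ)..1, g (p, τ)) := by
  induction n with
  | zero =>
    intro F _ _ _ g hg
    rw [Nat.cast_zero, contDiff_zero] at hg ⊢
    exact intervalIntegral.continuous_parametric_intervalIntegral_of_continuous'
      (f := fun p τ => g (p, τ)) hg 0 1
  | succ n ih =>
    intro F _ _ _ g hg
    have hg' : ContDiff ℝ (n + 1) g := by exact_mod_cast hg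
    let G : (ℝ × ℝ) × ℝ → (ℝ × ℝ) →L[ℝ] F := fun q =>
      (fderiv ℝ g q).comp (ContinuousLinearMap.inl ℝ (ℝ × ℝ) ℝ)
    have hG : ContDiff ℝ n G := (hg'.fderiv_right le_rfl).clm_comp contDiff_const
    have hGc : Continuous G := hG.continuous
    have hgc : Continuous g := hg'.continuous
    have hdiff : Differentiable ℝ g := hg'.differentiable (by simp)
    rw [Nat.cast_succ]
    rw [contDiff_succ_iff_hasFDerivAt]
    refine ⟨_, ih _ G hG, fun x => ?_⟩
    obtain ⟨C, hC⟩ := ((isCompact_closedBall x 1).prod (isCompact_Icc (a := (0:ℝ)) (b := 1))).exists_bound_of_continuousOn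
      hGc.continuousOn
    refine intervalIntegral.hasFDerivAt_integral_of_dominated_of_fderiv_le
      (F := fun p τ => g (p, τ)) (F' := fun p τ => G (p, τ)) (bound := fun _ => C)
      (s := closedBall x 1) (closedBall_mem_nhds x one_pos) ?_ ?_ ?_ ?_ ?_ ?_
    · exact Filter.Eventually.of_forall fun y =>
        (hgc.comp (by fun_prop : Continuous fun τ : ℝ => (y, τ))).aestronglyMeasurable
    · exact (hgc.comp (by fun_prop : Continuous fun τ : ℝ => (x, τ))).intervalIntegrable _ _
    · exact (hGc.comp (by fun_prop : Continuous fun τ : ℝ => (x, τ))).aestronglyMeasurable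
    · refine Filter.Eventually.of_forall fun τ hτ y hy => hC (y, τ) ⟨hy, ?_⟩
      rw [uIoc_of_le zero_le_one] at hτ
      exact Ioc_subset_Icc_self hτ
    · exact intervalIntegrable_const
    · refine Filter.Eventually.of_forall fun τ hτ y hy => ?_
      exact (hdiff (y, τ)).hasFDerivAt.comp y (hasFDerivAt_prodMk_left y τ)

/-- Hadamard's lemma. -/
lemma hadamard (f : ℝ × ℝ → ℝ) (hf : ContDiff ℝ ∞ f) (h0 : ∀ s, f (s, 0) = 0)
    (hper : ∀ s y, f (s + 2 * Real.pi, y) = f (s, y)) :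
    ∃ p : ℝ × ℝ → ℝ, ContDiff ℝ ∞ p ∧ (∀ s y, f (s, y) = y * p (s, y)) ∧
      ∀ s y, p (s + 2 * Real.pi, y) = p (s, y) := by
  let d : ℝ × ℝ → ℝ := fun q => fderiv ℝ f q (0, 1)
  have hd : ContDiff ℝ ∞ d := (hf.fderiv_right (by simp)).clm_apply contDiff_const
  have hdc : Continuous d := hd.continuous
  refine ⟨fun q => ∫ τ in (0:ℝ)..1, d (q.1, τ * q.2), ?_, ?_, ?_⟩
  · rw [contDiff_infty]
    intro n
    have : ContDiff ℝ n (fun q : (ℝ × ℝ) × ℝ => d (q.1.1, q.2 * q.1.2)) :=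
      (hd.comp (by fun_prop)).of_le (by exact_mod_cast le_top)
    exact contDiff_param n ℝ _ this
  · intro s y
    have h1 : ∀ τ ∈ uIcc (0:ℝ) 1, HasDerivAt (fun τ : ℝ => f (s, τ * y)) (d (s, τ * y) * y) τ := by
      intro τ _
      have h2 : HasDerivAt (fun τ : ℝ => (s, τ * y)) ((0:ℝ), y) τ := by
        have := (hasDerivAt_const τ s).prodMk ((hasDerivAt_id τ).mul_const y)
        simpa using this
      have h3 := (hf.differentiable (by simp) (s, τ * y)).hasFDerivAt.comp_hasDerivAt τ h2
      have h8 : ((0:ℝ), y) = y • ((0:ℝ), (1:ℝ)) := by simp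
      have h9 : d (s, τ * y) * y = fderiv ℝ f (s, τ * y) (0, y) := by
        rw [h8, map_smul, smul_eq_mul, mul_comm]
      rw [h9]
      exact h3
    have h4 := intervalIntegral.integral_eq_sub_of_hasDerivAt h1
      ((by fun_prop : Continuous fun τ : ℝ => d (s, τ * y) * y).intervalIntegrable _ _)
    rw [intervalIntegral.integral_mul_const] at h4
    simp only [one_mul, zero_mul, h0, sub_zero] at h4
    rw [← h4, mul_comm]
  · intro s y
    have h5 : ∀ s y, d (s + 2 * Real.pi, y) = d (s, y) := by
      intro s y
      have h6 : f = fun q => f (q + (2 * Real.pi, 0)) := by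
        funext q; obtain ⟨a, b⟩ := q; simp [hper]
      have h7 : fderiv ℝ f (s, y) = fderiv ℝ f ((s, y) + (2 * Real.pi, 0)) := by
        conv_lhs => rw [h6]
        rw [fderiv_comp_add_right]
      simp only [d]
      rw [h7]; simp
    simp only [h5]

lemma fderiv_per {f : ℝ × ℝ → E4} (hper : ∀ s y, f (s + 2 * Real.pi, y) = f (s, y)) (s y : ℝ) :
    fderiv ℝ f (s + 2 * Real.pi, y) = fderiv ℝ f (s, y) := by
  have h6 : f = fun q => f (q + (2 * Real.pi, 0)) := by
    funext q; obtain ⟨a, b⟩ := q; simp [hper]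
  have h7 : fderiv ℝ f (s, y) = fderiv ℝ f ((s, y) + (2 * Real.pi, 0)) := by
    conv_lhs => rw [h6]
    rw [fderiv_comp_add_right]
  rw [h7]; simp

lemma fderiv_slice {J : ℝ → ℝ × ℝ → E4} (hJ : ContDiff ℝ ∞ (fun q : ℝ × (ℝ × ℝ) => J q.1 q.2))
    (t : ℝ) (p : ℝ × ℝ) : fderiv ℝ (J t) p =
      (fderiv ℝ (fun q : ℝ × (ℝ × ℝ) => J q.1 q.2) (t, p)).comp
        (ContinuousLinearMap.inr ℝ ℝ (ℝ × ℝ)) :=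
  ((hJ.differentiable (by simp) (t, p)).hasFDerivAt.comp p (hasFDerivAt_prodMk_right t p)).fderiv

/-- Thin collars are embedded. -/
lemma thin (J : ℝ → ℝ × ℝ → E4) (hJ : ContDiff ℝ ∞ (fun q : ℝ × (ℝ × ℝ) => J q.1 q.2))
    (hper : ∀ t s y, J t (s + 2 * Real.pi, y) = J t (s, y))
    (hinj : ∀ t ∈ Icc (0:ℝ) 1, ∀ s s', J t (s, 0) = J t (s', 0) → ∃ k : ℤ, s' = s + 2 * Real.pi * k)
    (himm : ∀ t ∈ Icc (0:ℝ) 1, ∀ s, Function.Injective (fderiv ℝ (J t) (s, 0))) :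
    ∃ η > 0, ∀ t ∈ Icc (0:ℝ) 1, ∀ y ∈ Icc 0 η, ∀ y' ∈ Icc 0 η, ∀ s s',
      (J t (s, y) = J t (s', y') → y = y' ∧ ∃ k : ℤ, s' = s + 2 * Real.pi * k) ∧
      Function.Injective (fderiv ℝ (J t) (s, y)) := by
  let I2 := Icc (0:ℝ) (2 * Real.pi)
  have hK : IsCompact (Icc (0:ℝ) 1 ×ˢ (I2 ×ˢ I2)) := isCompact_Icc.prod (isCompact_Icc.prod isCompact_Icc)
  have hJc : Continuous (fun q : ℝ × (ℝ × ℝ) => J q.1 q.2) := hJ.continuous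
  have key := hK.eventually_forall_of_forall_eventually (x₀ := ((0:ℝ), (0:ℝ)))
    (P := fun Y q => (J q.1 (q.2.1, Y.1) = J q.1 (q.2.2, Y.2) → Y.1 = Y.2 ∧ ∃ k : ℤ, q.2.2 = q.2.1 + 2 * Real.pi * k) ∧
      Function.Injective (fderiv ℝ (J q.1) (q.2.1, Y.1))) ?_
  · obtain ⟨δ, hδ, hb⟩ := Metric.eventually_nhds_iff_ball.1 key
    refine ⟨δ / 2, by positivity, fun t ht y hy y' hy' s s' => ?_⟩
    obtain ⟨k, hk⟩ := exists_rep s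
    obtain ⟨k', hk'⟩ := exists_rep s'
    have hball : (y, y') ∈ ball ((0:ℝ), (0:ℝ)) δ := by
      rw [mem_ball, Prod.dist_eq, max_lt_iff]
      simp only [dist_zero_right, Real.norm_eq_abs]
      rw [abs_of_nonneg hy.1, abs_of_nonneg hy'.1]
      constructor <;> linarith [hy.2, hy'.2]
    have h := hb (y, y') hball (t, s + 2 * Real.pi * k, s' + 2 * Real.pi * k') ⟨ht, hk, hk'⟩
    simp only [per_int (hper t), per_int (fderiv_per (hper t))] at h
    refine ⟨fun he => ?_, h.2⟩
    obtain ⟨h1, m, hm⟩ := h.1 he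
    refine ⟨h1, k + m - k', ?_⟩
    push_cast
    linear_combination hm
  · rintro ⟨t, s, s'⟩ ⟨ht, -, -⟩
    simp only at ht
    refine Filter.Eventually.and ?_ ?_
    · by_cases he : J t (s, 0) = J t (s', 0)
      · obtain ⟨k, rfl⟩ := hinj t ht s s' he
        let Kf : ℝ × (ℝ × ℝ) → ℝ × E4 := fun q => (q.1, J q.1 q.2)
        have hKf : ContDiff ℝ ∞ Kf := contDiff_fst.prodMk hJ
        have hKi : Function.Injective (fderiv ℝ Kf (t, s, 0)) := by
          have hd : fderiv ℝ Kf (t, s, 0) = (ContinuousLinearMap.fst ℝ ℝ (ℝ × ℝ)).prod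
              (fderiv ℝ (fun q : ℝ × (ℝ × ℝ) => J q.1 q.2) (t, s, 0)) :=
            (hasFDerivAt_fst.prodMk (hJ.differentiable (by simp) _).hasFDerivAt).fderiv
          rw [hd, injective_iff_map_eq_zero]
          rintro ⟨a, b⟩ h
          simp only [ContinuousLinearMap.prod_apply, ContinuousLinearMap.coe_fst', Prod.mk_eq_zero] at h
          obtain ⟨rfl, h2⟩ := h
          have h3 := himm t ht s
          rw [fderiv_slice hJ, injective_iff_map_eq_zero] at h3
          rw [h3 b (by simpa using h2)]; rfl
        obtain ⟨g, -, hg⟩ := left_inv hKf hKi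
        have c1 : Continuous (fun q : (ℝ × ℝ) × (ℝ × ℝ × ℝ) => (q.2.1, q.2.2.1, q.1.1)) := by fun_prop
        have c2 : Continuous (fun q : (ℝ × ℝ) × (ℝ × ℝ × ℝ) => (q.2.1, q.2.2.2 - 2 * Real.pi * k, q.1.2)) := by fun_prop
        have e1 := (c1.tendsto ((0, 0), (t, s, s + 2 * Real.pi * k))).eventually hg
        have hg' : ∀ᶠ p' in 𝓝 (t, (s + 2 * Real.pi * k) - 2 * Real.pi * k, (0:ℝ)), g (Kf p') = p' := by
          rw [add_sub_cancel_right]; exact hg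
        have e2 := (c2.tendsto ((0, 0), (t, s, s + 2 * Real.pi * k))).eventually hg'
        filter_upwards [e1, e2] with q h1 h2 h3
        have h4 : J q.2.1 (q.2.2.2 - 2 * Real.pi * k, q.1.2) = J q.2.1 (q.2.2.2, q.1.2) := by
          rw [← per_int (hper q.2.1) k (q.2.2.2 - 2 * Real.pi * k), sub_add_cancel]
        have h5 : Kf (q.2.1, q.2.2.1, q.1.1) = Kf (q.2.1, q.2.2.2 - 2 * Real.pi * k, q.1.2) := by
          simp only [Kf]; rw [h4, h3]
        rw [h5, h2] at h1
        simp only [Prod.mk.injEq, true_and] at h1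
        exact ⟨h1.2.symm, k, by linarith [h1.1]⟩
      · have c1 : Continuous (fun q : (ℝ × ℝ) × (ℝ × ℝ × ℝ) => J q.2.1 (q.2.2.1, q.1.1)) :=
          hJc.comp (by fun_prop : Continuous (fun q : (ℝ × ℝ) × (ℝ × ℝ × ℝ) => (q.2.1, q.2.2.1, q.1.1)))
        have c2 : Continuous (fun q : (ℝ × ℝ) × (ℝ × ℝ × ℝ) => J q.2.1 (q.2.2.2, q.1.2)) :=
          hJc.comp (by fun_prop : Continuous (fun q : (ℝ × ℝ) × (ℝ × ℝ × ℝ) => (q.2.1, q.2.2.2, q.1.2)))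
        have ho : IsOpen {q : (ℝ × ℝ) × (ℝ × ℝ × ℝ) | J q.2.1 (q.2.2.1, q.1.1) ≠ J q.2.1 (q.2.2.2, q.1.2)} :=
          isOpen_ne_fun c1 c2
        filter_upwards [ho.mem_nhds (show ((0, 0), (t, s, s')) ∈ _ from he)] with q hq h
        exact absurd h hq
    · have c0 : Continuous (fun q : (ℝ × ℝ) × (ℝ × ℝ × ℝ) => fderiv ℝ (J q.2.1) (q.2.2.1, q.1.1)) := by
        simp only [fderiv_slice hJ]
        have hc := hJ.continuous_fderiv (by simp)
        exact (hc.comp (by fun_prop : Continuous (fun q : (ℝ × ℝ) × (ℝ × ℝ × ℝ) =>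
          (q.2.1, q.2.2.1, q.1.1)))).clm_comp continuous_const
      exact (c0.tendsto ((0, 0), (t, s, s'))).eventually
        (ContinuousLinearMap.isOpen_injective.mem_nhds (himm t ht s))

/-- coordinate vectors -/
def e2 : E4 := EuclideanSpace.single 2 1
def e3 : E4 := EuclideanSpace.single 3 1

lemma inner_E4 (x y : E4) : inner ℝ x y = x 0 * y 0 + x 1 * y 1 + x 2 * y 2 + x 3 * y 3 := by
  rw [PiLp.inner_apply, Fin.sum_univ_four]
  simp [mul_comm]

lemma norm_E4 (x : E4) : ‖x‖ ^ 2 = x 0 ^ 2 + x 1 ^ 2 + x 2 ^ 2 + x 3 ^ 2 := by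
  rw [← real_inner_self_eq_norm_sq, inner_E4]; ring

/-- The model band. -/
def band (η : ℝ) : Set S3 := {z | ∃ x : E4, ‖x‖ = 1 ∧ x 2 = 1/2 ∧ x 3 = 0 ∧ ∃ y ∈ Icc (0:ℝ) 1,
  (1 / qq (x + (η * y) • (((2:ℝ)/3) • x - ((4:ℝ)/3) • e2))) •
    (x + (η * y) • (((2:ℝ)/3) • x - ((4:ℝ)/3) • e2)) = z}

lemma inj_rescale {g : ℝ × ℝ → E4} (hg : Differentiable ℝ g) {c : ℝ} (hc : c ≠ 0) {s y : ℝ}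
    (h : Function.Injective (fderiv ℝ g (s, c * y))) :
    Function.Injective (fderiv ℝ (fun q : ℝ × ℝ => g (q.1, c * q.2)) (s, y)) := by
  have h1 : HasFDerivAt (fun q : ℝ × ℝ => (q.1, c * q.2))
      ((ContinuousLinearMap.fst ℝ ℝ ℝ).prod (c • ContinuousLinearMap.snd ℝ ℝ ℝ)) (s, y) :=
    hasFDerivAt_fst.prodMk (hasFDerivAt_snd.const_mul c)
  have h2 := ((hg (s, c * y)).hasFDerivAt.comp (s, y) h1).fderiv
  have h3 : (g ∘ fun q : ℝ × ℝ => (q.1, c * q.2)) = fun q : ℝ × ℝ => g (q.1, c * q.2) := rfl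
  rw [h3] at h2
  rw [h2]
  rw [ContinuousLinearMap.coe_comp]
  refine h.comp ?_
  rw [injective_iff_map_eq_zero]
  rintro ⟨a, b⟩ hab
  simp [hc] at hab
  simp [hab]

set_option maxHeartbeats 4000000 in
/-- Rotating the collar of an annulus onto the model band. -/
lemma main_lemma (f : ℝ × ℝ → E4) (hf : ContDiff ℝ ∞ f) (hA : IsAnn f) (hn : ∀ q, ‖f q‖ = 1)
    (h02 : ∀ s, f (s, 0) 2 = 1/2) (h03 : ∀ s, f (s, 0) 3 = 0)
    (hsurj : ∀ x : E4, ‖x‖ = 1 → x 2 = 1/2 → x 3 = 0 → ∃ s, f (s, 0) = x)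
    (h12 : ∀ s, f (s, 1) 2 = -(1/2)) (h13 : ∀ s, f (s, 1) 3 = 0) :
    ∃ η1 > 0, ∀ η, 0 < η → η ≤ η1 → Amb (img f) (band η) := by
  have hfd : Differentiable ℝ f := hf.differentiable (by simp)
  have hcoord : ∀ i : Fin 4, ContDiff ℝ ∞ (fun q => f q i) := fun i => by
    exact (contDiff_euclidean.1 hf) i
  obtain ⟨p, hp, hfp, hpper⟩ := hadamard (fun q => f q 2 - 1/2) ((hcoord 2).sub contDiff_const)
    (fun s => by rw [h02]; ring) (fun s y => by rw [hA.per])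
  obtain ⟨q, hq, hfq, hqper⟩ := hadamard (fun q => f q 3) (hcoord 3) h03
    (fun s y => by rw [hA.per])
  simp only at hfp hfq
  have hp1 : ∀ s, p (s, 1) = -1 := fun s => by have := hfp s 1; rw [h12] at this; linarith
  have hq1 : ∀ s, q (s, 1) = 0 := fun s => by have := hfq s 1; rw [h13] at this; linarith
  -- derivative data at the boundary
  let u : ℝ → E4 := fun s => fderiv ℝ f (s, 0) (1, 0)
  let v : ℝ → E4 := fun s => fderiv ℝ f (s, 0) (0, 1)
  have huv : ∀ s a b, fderiv ℝ f (s, 0) (a, b) = a • u s + b • v s := by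
    intro s a b
    have : ((a, b) : ℝ × ℝ) = a • ((1:ℝ), (0:ℝ)) + b • ((0:ℝ), (1:ℝ)) := by simp
    rw [this, map_add, map_smul, map_smul]
  have hind : ∀ s (a b : ℝ), a • u s + b • v s = 0 → a = 0 ∧ b = 0 := by
    intro s a b h
    rw [← huv] at h
    have := (injective_iff_map_eq_zero _).1 (hA.imm s 0 (by simp)) _ h
    simpa using this
  have hdu : ∀ s, HasDerivAt (fun s => f (s, 0)) (u s) s := fun s =>
    (hfd (s, 0)).hasFDerivAt.comp_hasDerivAt s ((hasDerivAt_id s).prodMk (hasDerivAt_const s (0:ℝ)))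
  have hdv : ∀ s, HasDerivAt (fun y => f (s, y)) (v s) 0 := fun s =>
    (hfd (s, 0)).hasFDerivAt.comp_hasDerivAt (0:ℝ) ((hasDerivAt_const (0:ℝ) s).prodMk (hasDerivAt_id (0:ℝ)))
  have hci : ∀ (i : Fin 4) {g : ℝ → E4} {g' : E4} {r : ℝ}, HasDerivAt g g' r →
      HasDerivAt (fun r => g r i) (g' i) r := fun i g g' r h =>
    (EuclideanSpace.proj i : E4 →L[ℝ] ℝ).hasFDerivAt.comp_hasDerivAt r h
  have hu2 : ∀ s, u s 2 = 0 := fun s => by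
    have h := hci 2 (hdu s)
    simp only [h02] at h
    exact h.unique (hasDerivAt_const _ _)
  have hu3 : ∀ s, u s 3 = 0 := fun s => by
    have h := hci 3 (hdu s)
    simp only [h03] at h
    exact h.unique (hasDerivAt_const _ _)
  have hprod : ∀ (g : ℝ × ℝ → ℝ), ContDiff ℝ ∞ g → ∀ s, HasDerivAt (fun y => y * g (s, y)) (g (s, 0)) 0 := by
    intro g hg s
    have h1 : Differentiable ℝ (fun y => g (s, y)) :=
      (hg.differentiable (by simp)).comp (by fun_prop)
    have h2 : HasDerivAt (fun y => y * g (s, y)) (1 * g (s, 0) + 0 * deriv (fun y => g (s, y)) 0) 0 :=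
      (hasDerivAt_id (0:ℝ)).mul (h1 0).hasDerivAt
    rwa [one_mul, zero_mul, add_zero] at h2
  have hv2 : ∀ s, v s 2 = p (s, 0) := fun s => by
    have h := (hci 2 (hdv s)).sub_const (1/2)
    simp only [hfp] at h
    exact h.unique (hprod p hp s)
  have hv3 : ∀ s, v s 3 = q (s, 0) := fun s => by
    have h := hci 3 (hdv s)
    simp only [hfq] at h
    exact h.unique (hprod q hq s)
  have hperp : ∀ {g : ℝ → E4} {g' : E4} {r : ℝ}, HasDerivAt g g' r → (∀ r, ‖g r‖ = 1) →
      inner ℝ (g r) g' = 0 := by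
    intro g g' r h h1
    have h2 := h.inner ℝ h
    simp only [real_inner_self_eq_norm_sq, h1] at h2
    have h3 := h2.unique (hasDerivAt_const _ _)
    rw [real_inner_comm (g r) g'] at h3
    linarith
  have hxu : ∀ s, inner ℝ (f (s, 0)) (u s) = 0 := fun s => hperp (hdu s) (fun _ => hn _)
  have hxv : ∀ s, inner ℝ (f (s, 0)) (v s) = 0 := fun s => hperp (hdv s) (fun _ => hn _)
  -- nonvanishing
  have hnz : ∀ s, ∀ t ∈ Icc (0:ℝ) 1, p (s, t) = 0 → q (s, t) = 0 → False := by
    intro s t ht h1 h2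
    rcases eq_or_lt_of_le ht.1 with h | h
    · rw [← h] at h1 h2
      have a1 := hxu s
      have a2 := hxv s
      have a3 := hv2 s
      have a4 := hv3 s
      rw [h1] at a3
      rw [h2] at a4
      rw [inner_E4, hu2, hu3] at a1
      rw [inner_E4, a3, a4] at a2
      have a5 := norm_E4 (f (s, 0))
      rw [hn, h02, h03] at a5
      have b0 : f (s, 0) 0 * (u s 0 * v s 1 - u s 1 * v s 0) = 0 := by
        linear_combination v s 1 * a1 - u s 1 * a2
      have b1 : f (s, 0) 1 * (u s 0 * v s 1 - u s 1 * v s 0) = 0 := by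
        linear_combination u s 0 * a2 - v s 0 * a1
      have b2 := hind s (-(f (s, 0) 1) * v s 0 + f (s, 0) 0 * v s 1)
        (-(-(f (s, 0) 1) * u s 0 + f (s, 0) 0 * u s 1)) (by
          ext i
          fin_cases i
          · simp; linear_combination b0
          · simp; linear_combination b1
          · simp [hu2, a3]
          · simp [hu3, a4])
      have b3 : u s = 0 := by
        have c1 : -(f (s, 0) 1) * u s 0 + f (s, 0) 0 * u s 1 = 0 := by linarith [b2.2]
        ext i
        fin_cases i
        · simp
          linear_combination (4/3) * (u s 0 * a5 + f (s, 0) 0 * a1 - f (s, 0) 1 * c1)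
        · simp
          linear_combination (4/3) * (u s 1 * a5 + f (s, 0) 1 * a1 + f (s, 0) 0 * c1)
        · simp [hu2]
        · simp [hu3]
      have b4 := hind s 1 0 (by rw [b3]; simp)
      exact one_ne_zero b4.1
    · have c2 := hfp s t
      have c3 := hfq s t
      rw [h1] at c2
      rw [h2] at c3
      obtain ⟨s', hs'⟩ := hsurj (f (s, t)) (hn _) (by linarith) (by linarith)
      have := (hA.inj s' s 0 (by simp) t ht hs').1
      linarith
  -- the family
  let R : ℝ × ℝ → E4 := fun w => (p (w.2, w.1) - (1 - w.1) * p (w.2, 0)) •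
      (-((2:ℝ)/3) • f (w.2, 0) + ((4:ℝ)/3) • e2) + (q (w.2, w.1) - (1 - w.1) * q (w.2, 0)) • e3
  have hR : ContDiff ℝ ∞ R := by
    have k1 : ContDiff ℝ ∞ (fun w : ℝ × ℝ => p (w.2, w.1)) := hp.comp (by fun_prop)
    have k2 : ContDiff ℝ ∞ (fun w : ℝ × ℝ => q (w.2, w.1)) := hq.comp (by fun_prop)
    have k3 : ContDiff ℝ ∞ (fun w : ℝ × ℝ => p (w.2, 0)) := hp.comp (by fun_prop)
    have k4 : ContDiff ℝ ∞ (fun w : ℝ × ℝ => q (w.2, 0)) := hq.comp (by fun_prop)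
    have k5 : ContDiff ℝ ∞ (fun w : ℝ × ℝ => f (w.2, 0)) := hf.comp (by fun_prop)
    have k6 : ContDiff ℝ ∞ (fun w : ℝ × ℝ => 1 - w.1) := by fun_prop
    have k7 : ContDiff ℝ ∞ (fun w : ℝ × ℝ => -((2:ℝ)/3) • f (w.2, 0) + ((4:ℝ)/3) • e2) :=
      (k5.const_smul (-((2:ℝ)/3))).add contDiff_const
    have k8 : ContDiff ℝ ∞ (fun _ : ℝ × ℝ => e3) := contDiff_const
    exact ((k1.sub (k6.mul k3)).smul k7).add ((k2.sub (k6.mul k4)).smul k8)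
  have hRper : ∀ t s, R (t, s + 2 * Real.pi) = R (t, s) := by
    intro t s; simp only [R, hpper, hqper, hA.per]
  have hR2 : ∀ t s, R (t, s) 2 = p (s, t) - (1 - t) * p (s, 0) := by
    intro t s; simp [R, h02, e2, e3]; ring
  have hR3 : ∀ t s, R (t, s) 3 = q (s, t) - (1 - t) * q (s, 0) := by
    intro t s; simp [R, h03, e2, e3]
  have hRx : ∀ t s, inner ℝ (f (s, 0)) (R (t, s)) = 0 := by
    intro t s
    have a5 := norm_E4 (f (s, 0))
    rw [hn, h02, h03] at a5
    rw [inner_E4]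
    simp [R, h02, h03, e2, e3]
    linear_combination (2/3) * (p (s, t) - (1 - t) * p (s, 0)) * a5
  let Z : ℝ → ℝ × ℝ → E4 := fun t w => (1 - t) • f w + t • f (w.1, 0) + w.2 • R (t, w.1)
  have hZ : ContDiff ℝ ∞ (fun w : ℝ × (ℝ × ℝ) => Z w.1 w.2) := by
    have k1 : ContDiff ℝ ∞ (fun w : ℝ × (ℝ × ℝ) => f w.2) := hf.comp (by fun_prop)
    have k2 : ContDiff ℝ ∞ (fun w : ℝ × (ℝ × ℝ) => f (w.2.1, 0)) := hf.comp (by fun_prop)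
    have k3 : ContDiff ℝ ∞ (fun w : ℝ × (ℝ × ℝ) => R (w.1, w.2.1)) := hR.comp (by fun_prop)
    have k4 : ContDiff ℝ ∞ (fun w : ℝ × (ℝ × ℝ) => 1 - w.1) := by fun_prop
    have k5 : ContDiff ℝ ∞ (fun w : ℝ × (ℝ × ℝ) => w.2.2) := by fun_prop
    exact ((k4.smul k1).add (contDiff_fst.smul k2)).add (k5.smul k3)
  have hZper : ∀ t s y, Z t (s + 2 * Real.pi, y) = Z t (s, y) := by
    intro t s y; simp only [Z, hRper, hA.per]
  have hZ0 : ∀ t s, Z t (s, 0) = f (s, 0) := by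
    intro t s; simp only [Z, zero_smul, add_zero, ← add_smul]; simp
  have hZd : ∀ t s, ∃ Z' : ℝ × ℝ →L[ℝ] E4, HasFDerivAt (Z t) Z' (s, 0) ∧
      ∀ a b, Z' (a, b) = a • u s + b • ((1 - t) • v s + R (t, s)) := by
    intro t s
    have d1 : HasFDerivAt (fun w => (1 - t) • f w) _ (s, 0) := (hfd (s, (0:ℝ))).hasFDerivAt.const_smul (1 - t)
    have d2 : HasFDerivAt (fun w : ℝ × ℝ => f (w.1, 0)) _ (s, 0) :=
      (hfd (s, (0:ℝ))).hasFDerivAt.comp (s, (0:ℝ)) (hasFDerivAt_fst.prodMk (hasFDerivAt_const (0:ℝ) _))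
    have hRs : Differentiable ℝ (fun w : ℝ × ℝ => R (t, w.1)) :=
      (hR.differentiable (by simp)).comp (by fun_prop)
    have d3 : HasFDerivAt (fun w : ℝ × ℝ => w.2 • R (t, w.1)) _ (s, 0) :=
      hasFDerivAt_snd.smul (hRs (s, 0)).hasFDerivAt
    refine ⟨_, (d1.add (d2.const_smul t)).add d3, fun a b => ?_⟩
    have e1 : fderiv ℝ f (s, 0) (a, b) = a • u s + b • v s := huv s a b
    have e4 : fderiv ℝ f (s, 0) (a, 0) = a • u s := by rw [huv]; simp
    simp [e1, e4]
    module
  let J : ℝ → ℝ × ℝ → E4 := fun t w => (1 / qq (Z t w)) • Z t w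
  have hJ : ContDiff ℝ ∞ (fun w : ℝ × (ℝ × ℝ) => J w.1 w.2) :=
    (contDiff_const.div (contDiff_qq.comp hZ) (fun w => (qq_pos _).ne')).smul hZ
  have hJper : ∀ t s y, J t (s + 2 * Real.pi, y) = J t (s, y) := by
    intro t s y; simp only [J, hZper]
  have hJ0 : ∀ t s, J t (s, 0) = f (s, 0) := by
    intro t s; simp only [J, hZ0]; rw [qq_one (hn _)]; simp
  have hJimm : ∀ t ∈ Icc (0:ℝ) 1, ∀ s, Function.Injective (fderiv ℝ (J t) (s, 0)) := by
    intro t ht s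
    obtain ⟨Z', hZ', hZ'e⟩ := hZd t s
    have hZt : ContDiff ℝ ∞ (Z t) := hZ.comp (contDiff_const.prodMk contDiff_id)
    have hc : Differentiable ℝ (fun w => 1 / qq (Z t w)) :=
      (contDiff_const.div (contDiff_qq.comp hZt) (fun w => (qq_pos _).ne')).differentiable
        (by simp : (∞ : WithTop ℕ∞) ≠ 0)
    have hd := ((hc (s, 0)).hasFDerivAt.smul hZ').fderiv
    have hJt : ((fun w => 1 / qq (Z t w)) • Z t) = J t := rfl
    rw [hJt] at hd
    rw [hd, injective_iff_map_eq_zero]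
    rintro ⟨a, b⟩ hab
    simp only [add_apply, smul_apply,
      ContinuousLinearMap.smulRight_apply, hZ0, qq_one (hn (s, 0)), hZ'e] at hab
    generalize fderiv ℝ (fun w => 1 / qq (Z t w)) (s, 0) (a, b) = m at hab
    have hm : m = 0 := by
      have := congrArg (fun z => inner ℝ (f (s, 0)) z) hab
      simp only [inner_add_right, inner_smul_right, hxu, hxv, hRx, inner_zero_right,
        real_inner_self_eq_norm_sq, hn] at this
      linarith
    rw [hm] at hab
    have h2 := congrArg (fun z : E4 => z 2) hab
    have h3 := congrArg (fun z : E4 => z 3) hab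
    simp [hu2, hv2, hR2] at h2
    simp [hu3, hv3, hR3] at h3
    have hb : b = 0 := by
      by_contra hb
      exact hnz s t ht (mul_left_cancel₀ hb (by linear_combination h2)) (mul_left_cancel₀ hb (by linear_combination h3))
    rw [hb] at hab
    have := hind s a 0 (by simpa using hab)
    rw [hb, this.1]; rfl
  have hJz : ∀ w, J 0 w = f w := by
    intro w
    have : Z 0 w = f w := by simp [Z, R]
    simp only [J, this, qq_one (hn w)]; simp
  have hJo : ∀ s y, J 1 (s, y) = (1 / qq (f (s, 0) + y • (((2:ℝ)/3) • f (s, 0) - ((4:ℝ)/3) • e2))) •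
      (f (s, 0) + y • (((2:ℝ)/3) • f (s, 0) - ((4:ℝ)/3) • e2)) := by
    intro s y
    have : Z 1 (s, y) = f (s, 0) + y • (((2:ℝ)/3) • f (s, 0) - ((4:ℝ)/3) • e2) := by
      simp [Z, R, hp1, hq1]
      module
    simp only [J, this]
  have hJn : ∀ t w, 1/2 ≤ ‖Z t w‖ ^ 2 → ‖J t w‖ = 1 := by
    intro t w h
    have h0 : ‖Z t w‖ ≠ 0 := by
      intro h0; rw [h0] at h; norm_num at h
    simp only [J]
    rw [qq_eq h, norm_smul, norm_div, norm_norm, norm_one]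
    field_simp
  clear_value J Z R
  obtain ⟨η0, hη0, hthin⟩ := thin J hJ hJper
    (fun t ht s s' h => (hA.inj s s' 0 (by simp) 0 (by simp) (by rwa [hJ0, hJ0] at h)).2) hJimm
  obtain ⟨δ, hδ, hZn⟩ : ∃ δ > 0, ∀ y ∈ Icc 0 δ, ∀ t ∈ Icc (0:ℝ) 1, ∀ s, 1/2 ≤ ‖Z t (s, y)‖ ^ 2 := by
    have hK : IsCompact (Icc (0:ℝ) 1 ×ˢ Icc (0:ℝ) (2 * Real.pi)) := isCompact_Icc.prod isCompact_Icc
    have key := hK.eventually_forall_of_forall_eventually (x₀ := (0:ℝ))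
      (P := fun y w => 1/2 < ‖Z w.1 (w.2, y)‖ ^ 2) (by
        rintro ⟨t, s⟩ -
        have hc : Continuous (fun w : ℝ × (ℝ × ℝ) => ‖Z w.2.1 (w.2.2, w.1)‖ ^ 2) :=
          (hZ.continuous.comp (by fun_prop : Continuous (fun w : ℝ × (ℝ × ℝ) =>
            (w.2.1, w.2.2, w.1)))).norm.pow 2
        refine (hc.tendsto (0, (t, s))).eventually (lt_mem_nhds ?_)
        rw [hZ0, hn]; norm_num)
    obtain ⟨δ, hδ, hb⟩ := Metric.eventually_nhds_iff_ball.1 key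
    refine ⟨δ / 2, by positivity, fun y hy t ht s => ?_⟩
    obtain ⟨k, hk⟩ := exists_rep s
    have h := hb y (by
      rw [mem_ball, Real.dist_eq, sub_zero, abs_of_nonneg hy.1]; linarith [hy.2])
      (t, s + 2 * Real.pi * k) ⟨ht, hk⟩
    simp only [per_int (hZper t)] at h
    exact h.le
  refine ⟨min (min η0 δ) 1, by positivity, fun η hη hη1 => ?_⟩
  have hη0' : η ≤ η0 := hη1.trans ((min_le_left _ _).trans (min_le_left _ _))
  have hηδ : η ≤ δ := hη1.trans ((min_le_left _ _).trans (min_le_right _ _))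
  have hη1' : η ≤ 1 := hη1.trans (min_le_right _ _)
  -- shrink
  have s1 : Amb (img f) (img (fun w : ℝ × ℝ => f (w.1, η * w.2))) := by
    have h := amb_of_family (fun t w => f (w.1, (1 - t + t * η) * w.2))
      (hf.comp (by fun_prop)) (fun t s y => hA.per _ _) (fun t ht => ?_)
    · simpa using h
    · have hc0 : 0 < 1 - t + t * η := by
        rcases eq_or_lt_of_le ht.2 with h | h
        · rw [h]; linarith
        · nlinarith [mul_nonneg ht.1 hη.le]
      have hc1 : 1 - t + t * η ≤ 1 := by nlinarith [ht.1]
      have hmem : ∀ y ∈ Icc (0:ℝ) 1, (1 - t + t * η) * y ∈ Icc (0:ℝ) 1 := fun y hy =>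
        ⟨mul_nonneg hc0.le hy.1, mul_le_one₀ hc1 hy.1 hy.2⟩
      refine ⟨fun s y hy => hn _, fun s y => hA.per _ _, fun s y hy => ?_, ?_⟩
      · exact inj_rescale hfd hc0.ne' (hA.imm s _ (hmem y hy))
      · intro s s' y hy y' hy' h
        obtain ⟨h1, h2⟩ := hA.inj s s' _ (hmem y hy) _ (hmem y' hy') h
        exact ⟨mul_left_cancel₀ hc0.ne' h1, h2⟩
  have hmem : ∀ y ∈ Icc (0:ℝ) 1, ∀ c, η ≤ c → η * y ∈ Icc (0:ℝ) c := fun y hy c hc =>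
    ⟨mul_nonneg hη.le hy.1, by nlinarith [hy.2, hy.1]⟩
  have hJt : ∀ t, Differentiable ℝ (J t) := fun t =>
    by
    have hl : ContDiff ℝ ∞ (fun w : ℝ × ℝ => (t, w)) := by fun_prop
    have hl2 : ContDiff ℝ ∞ (J t) := ContDiff.comp (g := fun w : ℝ × (ℝ × ℝ) => J w.1 w.2) hJ hl
    exact hl2.differentiable (by simp)
  have s2 : Amb (img (fun w : ℝ × ℝ => J 0 (w.1, η * w.2))) (img (fun w : ℝ × ℝ => J 1 (w.1, η * w.2))) := by
    refine amb_of_family (fun t w => J t (w.1, η * w.2)) ?_ (fun t s y => hJper _ _ _) (fun t ht => ?_)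
    · have hl : ContDiff ℝ ∞ (fun w : ℝ × (ℝ × ℝ) => (w.1, w.2.1, η * w.2.2)) := by fun_prop
      exact ContDiff.comp (g := fun w : ℝ × (ℝ × ℝ) => J w.1 w.2) hJ hl
    · refine ⟨fun s y hy => ?_, fun s y => hJper _ _ _, fun s y hy => ?_, ?_⟩
      · exact hJn _ _ (hZn _ (hmem y hy δ hηδ) t ht s)
      · exact inj_rescale (hJt t) hη.ne' (hthin t ht _ (hmem y hy η0 hη0') _ (hmem y hy η0 hη0') s s).2
      · intro s s' y hy y' hy' h
        obtain ⟨h1, h2⟩ := (hthin t ht _ (hmem y hy η0 hη0') _ (hmem y' hy' η0 hη0') s s').1 h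
        exact ⟨mul_left_cancel₀ hη.ne' h1, h2⟩
  simp only [hJz] at s2
  have s3 : img (fun w : ℝ × ℝ => J 1 (w.1, η * w.2)) = band η := by
    ext z
    constructor
    · rintro ⟨s, y, hy, h⟩
      simp only [hJo] at h
      exact ⟨f (s, 0), hn _, h02 s, h03 s, y, hy, h⟩
    · rintro ⟨x, hx1, hx2, hx3, y, hy, h⟩
      obtain ⟨s, rfl⟩ := hsurj x hx1 hx2 hx3
      refine ⟨s, y, hy, ?_⟩
      simp only [hJo]
      exact h
  rw [s3] at s2
  exact s1.trans s2

/-- The explicit parametrization of the standard annulus. -/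
def stdF : ℝ × ℝ → E4 := fun w =>
  !₂[Real.cos (Real.pi / 6 - Real.pi / 3 * w.2) * Real.cos w.1,
     Real.cos (Real.pi / 6 - Real.pi / 3 * w.2) * Real.sin w.1,
     Real.sin (Real.pi / 6 - Real.pi / 3 * w.2), 0]

lemma stdF_contDiff : ContDiff ℝ ∞ stdF := by
  rw [contDiff_euclidean]
  intro i
  fin_cases i <;> simp [stdF] <;> fun_prop

lemma stdF_norm (w : ℝ × ℝ) : ‖stdF w‖ = 1 := by
  have h : ‖stdF w‖ ^ 2 = 1 := by
    rw [norm_E4]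
    simp [stdF]
    set a := Real.pi / 6 - Real.pi / 3 * w.2
    linear_combination Real.cos a ^ 2 * Real.sin_sq_add_cos_sq w.1 + Real.sin_sq_add_cos_sq a
  nlinarith [norm_nonneg (stdF w)]

lemma std_angle {y : ℝ} (hy : y ∈ Icc (0:ℝ) 1) :
    Real.pi / 6 - Real.pi / 3 * y ∈ Icc (-(Real.pi / 6)) (Real.pi / 6) := by
  have := Real.pi_pos
  constructor <;> nlinarith [hy.1, hy.2]

lemma std_cos_pos {a : ℝ} (ha : a ∈ Icc (-(Real.pi / 6)) (Real.pi / 6)) : 0 < Real.cos a := by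
  have := Real.pi_pos
  exact Real.cos_pos_of_mem_Ioo ⟨by linarith [ha.1], by linarith [ha.2]⟩

lemma circle_param {a b r : ℝ} (hr : 0 < r) (h : a ^ 2 + b ^ 2 = r ^ 2) :
    ∃ s, r * Real.cos s = a ∧ r * Real.sin s = b := by
  have h1 : ‖(⟨a, b⟩ : ℂ)‖ = r := by
    rw [← abs_of_pos hr, ← Real.sqrt_sq_eq_abs, ← h, Complex.norm_def, Complex.normSq_apply]
    congr 1; simp; ring
  refine ⟨Complex.arg ⟨a, b⟩, ?_, ?_⟩
  · rw [← h1, Complex.norm_mul_cos_arg]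
  · rw [← h1, Complex.norm_mul_sin_arg]

lemma stdF_hasDeriv (s y : ℝ) : (fderiv ℝ stdF (s, y)) (1, 0) =
      !₂[-(Real.cos (Real.pi / 6 - Real.pi / 3 * y) * Real.sin s),
        Real.cos (Real.pi / 6 - Real.pi / 3 * y) * Real.cos s, 0, 0] ∧
    ((fderiv ℝ stdF (s, y)) (0, 1)) 2 =
      -(Real.pi / 3 * Real.cos (Real.pi / 6 - Real.pi / 3 * y)) := by
  have hd := stdF_contDiff.differentiable (by simp)
  have hci : ∀ (i : Fin 4) {g : ℝ → E4} {g' : E4} {r : ℝ}, HasDerivAt g g' r →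
      HasDerivAt (fun r => g r i) (g' i) r := fun i g g' r h =>
    (EuclideanSpace.proj i : E4 →L[ℝ] ℝ).hasFDerivAt.comp_hasDerivAt r h
  have h1 : HasDerivAt (fun s => stdF (s, y)) (fderiv ℝ stdF (s, y) (1, 0)) s :=
    HasFDerivAt.comp_hasDerivAt (f := fun s : ℝ => (s, y)) s (hd (s, y)).hasFDerivAt
      ((hasDerivAt_id s).prodMk (hasDerivAt_const s y))
  have h2 : HasDerivAt (fun y => stdF (s, y)) (fderiv ℝ stdF (s, y) (0, 1)) y :=
    (hd (s, y)).hasFDerivAt.comp_hasDerivAt y ((hasDerivAt_const y s).prodMk (hasDerivAt_id y))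
  constructor
  · ext i
    have h3 := hci i h1
    fin_cases i
    · refine h3.unique ?_
      have := (Real.hasDerivAt_cos s).const_mul (Real.cos (Real.pi / 6 - Real.pi / 3 * y))
      simpa [stdF] using this
    · refine h3.unique ?_
      have := (Real.hasDerivAt_sin s).const_mul (Real.cos (Real.pi / 6 - Real.pi / 3 * y))
      simpa [stdF] using this
    · refine h3.unique ?_
      have := hasDerivAt_const s (Real.sin (Real.pi / 6 - Real.pi / 3 * y))
      simpa [stdF] using this
    · refine h3.unique ?_
      have := hasDerivAt_const s (0:ℝ)
      simpa [stdF] using this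
  · refine (hci 2 h2).unique ?_
    have h4 : HasDerivAt (fun y => Real.pi / 6 - Real.pi / 3 * y) (-(Real.pi / 3)) y := by
      have := ((hasDerivAt_id y).const_mul (Real.pi / 3)).const_sub (Real.pi / 6)
      simpa using this
    have h5 := h4.sin
    have h6 : HasDerivAt (fun y => Real.sin (Real.pi / 6 - Real.pi / 3 * y))
      (-(Real.pi / 3 * Real.cos (Real.pi / 6 - Real.pi / 3 * y))) y := by
      convert h5 using 1; ring
    exact h6

lemma stdF_isAnn : IsAnn stdF where
  norm1 s y _ := stdF_norm _
  per s y := by simp [stdF]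
  imm s y hy := by
    obtain ⟨h1, h2⟩ := stdF_hasDeriv s y
    have hc := std_cos_pos (std_angle hy)
    set c := Real.cos (Real.pi / 6 - Real.pi / 3 * y)
    rw [injective_iff_map_eq_zero]
    rintro ⟨a, b⟩ hab
    have : ((a, b) : ℝ × ℝ) = a • ((1:ℝ), (0:ℝ)) + b • ((0:ℝ), (1:ℝ)) := by simp
    rw [this, map_add, map_smul, map_smul, h1] at hab
    have k2 := congrArg (fun z : E4 => z 2) hab
    simp [h2, hc.ne', Real.pi_ne_zero] at k2
    subst k2
    have k0 := congrArg (fun z : E4 => z 0) hab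
    have k1 := congrArg (fun z : E4 => z 1) hab
    simp at k0 k1
    have ha : a = 0 := by
      by_contra ha
      have e0 : Real.sin s = 0 := by
        rcases k0 with h | h | h
        · exact absurd h ha
        · exact absurd h hc.ne'
        · exact h
      have e1 : Real.cos s = 0 := by
        rcases k1 with h | h | h
        · exact absurd h ha
        · exact absurd h hc.ne'
        · exact h
      have := Real.sin_sq_add_cos_sq s
      rw [e0, e1] at this; norm_num at this
    rw [ha]; rfl
  inj s s' y hy y' hy' h := by
    have k2 := congrArg (fun z : E4 => z 2) h
    have k0 := congrArg (fun z : E4 => z 0) h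
    have k1 := congrArg (fun z : E4 => z 1) h
    simp [stdF] at k0 k1 k2
    have hp := Real.pi_pos
    have hy1 := std_angle hy
    have hy1' := std_angle hy'
    have h3 : Real.pi / 6 - Real.pi / 3 * y = Real.pi / 6 - Real.pi / 3 * y' :=
      Real.injOn_sin ⟨by linarith [hy1.1], by linarith [hy1.2]⟩
        ⟨by linarith [hy1'.1], by linarith [hy1'.2]⟩ k2
    have hyy : y = y' := by
      have : Real.pi / 3 * y = Real.pi / 3 * y' := by linarith
      exact mul_left_cancel₀ (by positivity) this
    refine ⟨hyy, ?_⟩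
    subst hyy
    have hc := std_cos_pos hy1
    have e0 := mul_left_cancel₀ hc.ne' k0
    have e1 := mul_left_cancel₀ hc.ne' k1
    have h4 : (s : Real.Angle) = (s' : Real.Angle) := Real.Angle.cos_sin_inj e0 e1
    obtain ⟨k, hk⟩ := Real.Angle.angle_eq_iff_two_pi_dvd_sub.1 h4
    refine ⟨-k, ?_⟩
    push_cast
    linarith

lemma stdF_surj (x : E4) (hx : ‖x‖ = 1) (h3 : x 3 = 0) (h2 : x 2 ∈ Icc (-(1:ℝ)/2) (1/2)) :
    ∃ s, ∃ y ∈ Icc (0:ℝ) 1, stdF (s, y) = x ∧ (x 2 = 1/2 → y = 0) := by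
  have hp := Real.pi_pos
  have hs6 : Real.arcsin (1/2) = Real.pi / 6 := by
    rw [← Real.sin_pi_div_six]
    exact Real.arcsin_sin (by linarith) (by linarith)
  have hl : Real.arcsin (x 2) ≤ Real.pi / 6 := by
    rw [← hs6]; exact Real.monotone_arcsin h2.2
  have hg : -(Real.pi / 6) ≤ Real.arcsin (x 2) := by
    rw [← hs6, ← Real.arcsin_neg]; exact Real.monotone_arcsin (by linarith [h2.1])
  set a := Real.arcsin (x 2) with ha
  have hsin : Real.sin a = x 2 := Real.sin_arcsin (by linarith [h2.1]) (by linarith [h2.2])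
  have hc := std_cos_pos ⟨hg, hl⟩
  have hn := norm_E4 x
  rw [hx, h3] at hn
  obtain ⟨s, hs0, hs1⟩ := circle_param (a := x 0) (b := x 1) hc (by
    have := Real.sin_sq_add_cos_sq a
    rw [hsin] at this
    linarith)
  have hay' : Real.pi / 6 - Real.pi / 3 * (2⁻¹ - 3 * a / Real.pi) = a := by
    field_simp; ring
  refine ⟨s, 1/2 - 3 * a / Real.pi, ⟨?_, ?_⟩, ?_, ?_⟩
  · rw [sub_nonneg, div_le_iff₀ hp]; linarith
  · rw [sub_le_iff_le_add, ← sub_le_iff_le_add', le_div_iff₀ hp]; linarith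
  · ext i
    fin_cases i
    · simpa [stdF, hay'] using hs0
    · simpa [stdF, hay'] using hs1
    · simpa [stdF, hay'] using hsin
    · simpa [stdF] using h3.symm
  · intro h
    rw [h, hs6] at ha
    rw [ha]; field_simp; norm_num

lemma stdF_img : img stdF = stdAnnulus := by
  ext z
  constructor
  · rintro ⟨s, y, hy, h⟩
    have hp := Real.pi_pos
    have ha := std_angle hy
    have hl : Real.sin (Real.pi / 6 - Real.pi / 3 * y) ≤ Real.sin (Real.pi / 6) :=
      Real.sin_le_sin_of_le_of_le_pi_div_two (by linarith [ha.1]) (by linarith) ha.2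
    have hg : Real.sin (-(Real.pi / 6)) ≤ Real.sin (Real.pi / 6 - Real.pi / 3 * y) :=
      Real.sin_le_sin_of_le_of_le_pi_div_two (by linarith) (by linarith [ha.2]) ha.1
    rw [Real.sin_neg] at hg
    rw [Real.sin_pi_div_six] at hl hg
    refine ⟨by rw [← h]; simp [stdF], ?_⟩
    rw [← h]
    have : stdF (s, y) 2 = Real.sin (Real.pi / 6 - Real.pi / 3 * y) := rfl
    rw [this]
    exact ⟨by linarith, hl⟩
  · rintro ⟨h3, h2⟩
    obtain ⟨s, y, hy, h, -⟩ := stdF_surj z (by simp) h3 h2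
    exact ⟨s, y, hy, h⟩

lemma std_band : ∃ η1 > 0, ∀ η, 0 < η → η ≤ η1 → Amb stdAnnulus (band η) := by
  rw [← stdF_img]
  refine main_lemma stdF stdF_contDiff stdF_isAnn stdF_norm ?_ ?_ ?_ ?_ ?_
  · intro s; simp [stdF]
  · intro s; simp [stdF]
  · intro x hx h2 h3
    obtain ⟨s, y, hy, h, h0⟩ := stdF_surj x hx h3 (by rw [h2]; constructor <;> norm_num)
    rw [h0 h2] at h
    exact ⟨s, h⟩
  · intro s
    have : stdF (s, 1) 2 = Real.sin (Real.pi / 6 - Real.pi / 3 * 1) := rfl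
    rw [this, show Real.pi / 6 - Real.pi / 3 * 1 = -(Real.pi / 6) by ring, Real.sin_neg,
      Real.sin_pi_div_six]
  · intro s; simp [stdF]

/-- A continuous function on the line with two values is constant. -/
lemma const_of_two {g : ℝ → ℝ} (hg : Continuous g) (h : ∀ s, g s = 1/2 ∨ g s = -(1/2)) :
    (∀ s, g s = 1/2) ∨ (∀ s, g s = -(1/2)) := by
  by_contra hc
  push Not at hc
  obtain ⟨⟨a, ha⟩, b, hb⟩ := hc
  have ha' := (h a).resolve_left ha
  have hb' := (h b).resolve_right hb
  have h0 : (0:ℝ) ∈ range g := by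
    refine mem_range_of_exists_le_of_exists_ge hg ⟨a, ?_⟩ ⟨b, ?_⟩
    · rw [ha']; norm_num
    · rw [hb']; norm_num
  obtain ⟨c, hc⟩ := h0
  rcases h c with h | h <;> rw [hc] at h <;> norm_num at h

lemma ann_flip {f : ℝ × ℝ → E4} (hf : ContDiff ℝ ∞ f) (hA : IsAnn f) :
    IsAnn (fun w : ℝ × ℝ => f (w.1, 1 - w.2)) where
  norm1 s y hy := hA.norm1 _ _ ⟨by linarith [hy.2], by linarith [hy.1]⟩
  per s y := hA.per _ _
  imm s y hy := by
    have h := hA.imm s (1 - y) ⟨by linarith [hy.2], by linarith [hy.1]⟩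
    have h1 : HasFDerivAt (fun q : ℝ × ℝ => (q.1, 1 - q.2))
        ((ContinuousLinearMap.fst ℝ ℝ ℝ).prod (-ContinuousLinearMap.snd ℝ ℝ ℝ)) (s, y) :=
      hasFDerivAt_fst.prodMk (hasFDerivAt_snd.const_sub 1)
    have h2 := ((hf.differentiable (by simp) (s, 1 - y)).hasFDerivAt.comp (s, y) h1).fderiv
    have h3 : (f ∘ fun q : ℝ × ℝ => (q.1, 1 - q.2)) = fun q : ℝ × ℝ => f (q.1, 1 - q.2) := rfl
    rw [h3] at h2
    rw [h2, ContinuousLinearMap.coe_comp]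
    refine h.comp ?_
    rw [injective_iff_map_eq_zero]
    rintro ⟨a, b⟩ hab
    simp at hab
    simp [hab]
  inj s s' y hy y' hy' h := by
    obtain ⟨h1, h2⟩ := hA.inj s s' (1 - y) ⟨by linarith [hy.2], by linarith [hy.1]⟩ (1 - y')
      ⟨by linarith [hy'.2], by linarith [hy'.1]⟩ h
    exact ⟨by linarith, h2⟩

lemma img_flip (f : ℝ × ℝ → E4) : img (fun w : ℝ × ℝ => f (w.1, 1 - w.2)) = img f := by
  ext z
  constructor
  · rintro ⟨s, y, hy, h⟩
    exact ⟨s, 1 - y, ⟨by linarith [hy.2], by linarith [hy.1]⟩, h⟩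
  · rintro ⟨s, y, hy, h⟩
    exact ⟨s, 1 - y, ⟨by linarith [hy.2], by linarith [hy.1]⟩, by simpa using h⟩

/-- Annuli with the prescribed boundary, in ambient form. -/
lemma ann_band (f : ℝ × ℝ → E4) (hf : ContDiff ℝ ∞ f) (hA : IsAnn f) (hn : ∀ q, ‖f q‖ = 1)
    (h1 : ∀ s, ∀ y ∈ ({0, 1} : Set ℝ), f (s, y) 3 = 0 ∧ (f (s, y) 2 = 1/2 ∨ f (s, y) 2 = -(1/2)))
    (h2 : ∀ x : E4, ‖x‖ = 1 → x 3 = 0 → (x 2 = 1/2 ∨ x 2 = -(1/2)) →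
      ∃ s, ∃ y ∈ ({0, 1} : Set ℝ), f (s, y) = x) :
    ∃ η1 > 0, ∀ η, 0 < η → η ≤ η1 → Amb (img f) (band η) := by
  have hc : ∀ y, Continuous (fun s => f (s, y) 2) := fun y =>
    (EuclideanSpace.proj 2 : E4 →L[ℝ] ℝ).continuous.comp (hf.continuous.comp (by fun_prop))
  have c0 := const_of_two (hc 0) (fun s => (h1 s 0 (by simp)).2)
  have c1 := const_of_two (hc 1) (fun s => (h1 s 1 (by simp)).2)
  obtain ⟨xp, hxp, hxp3, hxp2⟩ : ∃ x : E4, ‖x‖ = 1 ∧ x 3 = 0 ∧ x 2 = 1/2 :=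
    ⟨stdF (0, 0), stdF_norm _, by simp [stdF], by simp [stdF]⟩
  obtain ⟨xm, hxm, hxm3, hxm2⟩ : ∃ x : E4, ‖x‖ = 1 ∧ x 3 = 0 ∧ x 2 = -(1/2) :=
    ⟨-xp, by simpa using hxp, by simp [hxp3], by simp [hxp2]⟩
  obtain ⟨sp, yp, hyp, hp⟩ := h2 xp hxp hxp3 (Or.inl hxp2)
  obtain ⟨sm, ym, hym, hm⟩ := h2 xm hxm hxm3 (Or.inr hxm2)
  rw [← hp] at hxp2
  rw [← hm] at hxm2
  rcases c0 with c0 | c0 <;> rcases c1 with c1 | c1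
  · exfalso
    rcases hym with h | h
    · rw [h, c0] at hxm2; norm_num at hxm2
    · rw [mem_singleton_iff.1 h, c1] at hxm2; norm_num at hxm2
  · refine main_lemma f hf hA hn c0 (fun s => (h1 s 0 (by simp)).1) ?_ c1
      (fun s => (h1 s 1 (by simp)).1)
    intro x hx hx2 hx3
    obtain ⟨s, y, hy, h⟩ := h2 x hx hx3 (Or.inl hx2)
    rcases hy with h' | h'
    · exact ⟨s, by rw [← h, h']⟩
    · rw [← h, mem_singleton_iff.1 h', c1] at hx2; norm_num at hx2
  · rw [← img_flip]
    refine main_lemma _ (hf.comp (by fun_prop)) (ann_flip hf hA) (fun _ => hn _) ?_ ?_ ?_ ?_ ?_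
    · intro s; simpa using c1 s
    · intro s; simpa using (h1 s 1 (by simp)).1
    · intro x hx hx2 hx3
      obtain ⟨s, y, hy, h⟩ := h2 x hx hx3 (Or.inl hx2)
      rcases hy with h' | h'
      · rw [← h, h', c0] at hx2; norm_num at hx2
      · exact ⟨s, by rw [← h, mem_singleton_iff.1 h']; simp⟩
    · intro s; simpa using c0 s
    · intro s; simpa using (h1 s 0 (by simp)).1
  · exfalso
    rcases hyp with h | h
    · rw [h, c0] at hxp2; norm_num at hxp2
    · rw [mem_singleton_iff.1 h, c1] at hxp2; norm_num at hxp2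

lemma emb_isAnn (A : EmbeddedAnnulus) : ContDiff ℝ ∞ (fun q => (A.F q : E4)) ∧
    IsAnn (fun q => (A.F q : E4)) := by
  have := fact_finrank
  have hs : ContMDiff 𝓘(ℝ, ℝ × ℝ) 𝓘(ℝ, E4) ∞ (fun q => (A.F q : E4)) := cm_coe.comp A.smooth
  refine ⟨hs.contDiff, ⟨fun s y _ => by simp, fun s y => by simp only [A.periodic], fun s y hy => ?_,
    fun s s' y hy y' hy' h => (A.inj s s' y y' hy hy').1 (Subtype.ext h)⟩⟩
  have h1 : MDifferentiableAt 𝓘(ℝ, ℝ × ℝ) (𝓡 3) A.F (s, y) :=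
    A.smooth.mdifferentiableAt (by simp)
  have h2 : MDifferentiableAt (𝓡 3) 𝓘(ℝ, E4) (fun x : S3 => (x : E4)) (A.F (s, y)) :=
    cm_coe.mdifferentiableAt (by simp)
  have h3 := mfderiv_comp (s, y) h2 h1
  have h4 : mfderiv 𝓘(ℝ, ℝ × ℝ) 𝓘(ℝ, E4) (fun q => (A.F q : E4)) (s, y) =
      fderiv ℝ (fun q => (A.F q : E4)) (s, y) := mfderiv_eq_fderiv
  rw [← h4]
  have h5 : (fun q => (A.F q : E4)) = (fun x : S3 => (x : E4)) ∘ A.F := rfl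
  rw [h5, h3]
  exact (mfderiv_coe_sphere_injective (n := 3) (A.F (s, y))).comp (A.immersion (s, y) hy)

/-- If `A'` is any smoothly embedded annulus in `S³` whose boundary
equals the boundary `∂A₀` of the standard unknotted annulus `A₀`, then there is a smooth
ambient isotopy of `S³` sending `A₀` to `A'`. -/
theorem standard_annulus_ambient_isotopic_of_same_boundary
    (A' : EmbeddedAnnulus) (hbd : A'.bdry = stdAnnulusBdry) :
    ∃ h : AmbientIsotopy, h.Sends stdAnnulus A'.carrier := by
  obtain ⟨hf, hA⟩ := emb_isAnn A'
  have hcar : img (fun q => (A'.F q : E4)) = A'.carrier := by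
    ext z
    constructor
    · rintro ⟨s, y, hy, h⟩
      exact ⟨(s, y), ⟨mem_univ _, hy⟩, Subtype.ext h⟩
    · rintro ⟨⟨s, y⟩, ⟨-, hy⟩, h⟩
      exact ⟨s, y, hy, congrArg Subtype.val h⟩
  obtain ⟨η1, hη1, H1⟩ := std_band
  obtain ⟨η2, hη2, H2⟩ := ann_band _ hf hA (fun _ => by simp)
    (fun s y hy => by
      have h : A'.F (s, y) ∈ A'.bdry := ⟨(s, y), ⟨mem_univ _, hy⟩, rfl⟩
      rw [hbd] at h
      exact h)
    (fun x hx h3 h2 => by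
      have h : (⟨x, by simpa using hx⟩ : S3) ∈ stdAnnulusBdry := ⟨h3, h2⟩
      rw [← hbd] at h
      obtain ⟨⟨s, y⟩, ⟨-, hy⟩, h⟩ := h
      exact ⟨s, y, hy, congrArg Subtype.val h⟩)
  rw [hcar] at H2
  have hη : 0 < min η1 η2 := lt_min hη1 hη2
  exact (H1 _ hη (min_le_left _ _)).trans (H2 _ hη (min_le_right _ _)).symm
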